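/- arXiv:2301.09101 — 3 statements merged into one kernel-verified Lean document; each statement's English description precedes it below -/
import Mathlib

section
/- Let p be a prime and G a non-abelian finite p-group of order p^n and nilpotency class c, with derived subgroup of order p^k and minimal number of generators d. Then the order of the Schur multiplier M(G) satisfies |M(G)| ≤ p^{(1/2)(d-1)(n+k) − Σ_{i=2}^{min(d,c)} (d−i)}. -/
/-- The Schur multiplier of a group `G`: the second cohomology group `H²(G, ℂˣ)`
of `G` with coefficients in `ℂˣ` (with trivial `G`-action), as in the paper. -/
noncomputable def schurMultiplier (G : Type) [Group G] : Type :=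
  groupCohomology (Rep.trivial ℤ G (Additive ℂˣ)) 2

/-- A multiplicative 2-cocycle with trivial action. -/
structure TrivCocycle (G A : Type) [Group G] [CommGroup A] where
  c : G → G → A
  coc : ∀ g h j, c (g * h) j * c g h = c h j * c g (h * j)

/-- The central extension defined by a cocycle. -/
@[ext]
structure CocycleExt {G A : Type} [Group G] [CommGroup A] (f : TrivCocycle G A) where
  a : A
  g : G

namespace CocycleExt
variable {G A : Type} [Group G] [CommGroup A] (f : TrivCocycle G A)

theorem c_one_left (g : G) : f.c 1 g = f.c 1 1 := by
  have := f.coc 1 1 g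
  simp only [one_mul] at this
  exact (mul_left_cancel this).symm

theorem c_one_right (g : G) : f.c g 1 = f.c 1 1 := by
  have := f.coc g 1 1
  simp only [mul_one] at this
  exact mul_right_cancel this

instance : Mul (CocycleExt f) := ⟨fun x y => ⟨x.a * y.a * f.c x.g y.g, x.g * y.g⟩⟩
instance : One (CocycleExt f) := ⟨⟨(f.c 1 1)⁻¹, 1⟩⟩
instance : Inv (CocycleExt f) := ⟨fun x => ⟨x.a⁻¹ * (f.c x.g⁻¹ x.g)⁻¹ * (f.c 1 1)⁻¹, x.g⁻¹⟩⟩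

theorem mul_def (x y : CocycleExt f) : x * y = ⟨x.a * y.a * f.c x.g y.g, x.g * y.g⟩ := rfl
theorem one_def : (1 : CocycleExt f) = ⟨(f.c 1 1)⁻¹, 1⟩ := rfl
theorem inv_def (x : CocycleExt f) :
    x⁻¹ = ⟨x.a⁻¹ * (f.c x.g⁻¹ x.g)⁻¹ * (f.c 1 1)⁻¹, x.g⁻¹⟩ := rfl

instance : Group (CocycleExt f) := Group.ofLeftAxioms
  (fun x y z => by
    ext
    · simp only [mul_def]
      have := f.coc x.g y.g z.g
      calc x.a * y.a * f.c x.g y.g * z.a * f.c (x.g * y.g) z.g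
          = x.a * y.a * z.a * (f.c (x.g * y.g) z.g * f.c x.g y.g) := by
            simp only [mul_comm, mul_left_comm, mul_assoc]
        _ = _ := by rw [this]; simp only [mul_comm, mul_left_comm, mul_assoc]
    · simp [mul_def, mul_assoc])
  (fun x => by
    ext
    · simp [mul_def, one_def, c_one_left f x.g]
    · simp [mul_def, one_def])
  (fun x => by
    ext
    · simp only [mul_def, inv_def, one_def]
      calc _ = (x.a⁻¹ * x.a) * ((f.c x.g⁻¹ x.g)⁻¹ * f.c x.g⁻¹ x.g) * (f.c 1 1)⁻¹ := by
            simp only [mul_comm, mul_left_comm, mul_assoc]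
        _ = _ := by simp
    · simp [mul_def, one_def, inv_def])

/-- projection -/
def proj : CocycleExt f →* G where
  toFun x := x.g
  map_one' := rfl
  map_mul' _ _ := rfl

/-- inclusion -/
def incl : A →* CocycleExt f where
  toFun a := ⟨a * (f.c 1 1)⁻¹, 1⟩
  map_one' := by simp [one_def]
  map_mul' a b := by
    ext
    · simp [mul_def, mul_assoc, mul_left_comm]
    · simp [mul_def]

theorem incl_injective : Function.Injective (incl f) := by
  intro a b h
  have : a * (f.c 1 1)⁻¹ = b * (f.c 1 1)⁻¹ := congrArg CocycleExt.a h
  exact mul_right_cancel this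

theorem range_incl : (incl f).range = (proj f).ker := by
  ext x
  constructor
  · rintro ⟨a, rfl⟩; rfl
  · intro h
    have h : x.g = 1 := h
    refine ⟨x.a * f.c 1 1, ?_⟩
    ext
    · simp [incl]
    · simp [incl, h]

theorem proj_surjective : Function.Surjective (proj f) := fun g => ⟨⟨1, g⟩, rfl⟩

theorem incl_mul (a : A) (x : CocycleExt f) : incl f a * x = ⟨a * x.a, x.g⟩ := by
  ext
  · simp only [mul_def, incl, MonoidHom.coe_mk, OneHom.coe_mk, c_one_left f x.g]
    rw [mul_assoc, mul_assoc, mul_comm x.a, inv_mul_cancel_left]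
  · simp [mul_def, incl]

theorem mul_incl (a : A) (x : CocycleExt f) : x * incl f a = ⟨a * x.a, x.g⟩ := by
  ext
  · simp only [mul_def, incl, MonoidHom.coe_mk, OneHom.coe_mk, c_one_right f x.g]
    rw [mul_assoc, inv_mul_cancel_right, mul_comm]
  · simp [mul_def, incl]

theorem section_mul (g h : G) :
    (⟨1, g⟩ : CocycleExt f) * ⟨1, h⟩ = incl f (f.c g h) * ⟨1, g * h⟩ := by
  rw [incl_mul, mul_def]; simp

theorem ker_le_center : (proj f).ker ≤ Subgroup.center _ := by
  rw [← range_incl]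
  rintro _ ⟨a, rfl⟩
  rw [Subgroup.mem_center_iff]
  intro x
  rw [incl_mul, mul_incl]

theorem card_commutator : Nat.card ((commutator (CocycleExt f)).comap (incl f))
    * Nat.card (commutator G) = Nat.card (commutator (CocycleExt f)) := by
  have h1 : (commutator (CocycleExt f)).map (proj f) = commutator G := by
    rw [commutator_def, Subgroup.map_commutator, ← MonoidHom.range_eq_map,
      MonoidHom.range_eq_top.2 (proj_surjective f)]
    rfl
  have h2 : Nat.card ((commutator (CocycleExt f)).comap (incl f)) =
      Nat.card (((proj f).ker ⊓ commutator (CocycleExt f) : Subgroup _)) := by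
    rw [← range_incl, ← Subgroup.map_comap_eq, Subgroup.card_map_of_injective (incl_injective f)]
  rw [h2, ← h1, ← Subgroup.relIndex_ker, ← Subgroup.inf_relIndex_right, mul_comm,
    ← Subgroup.relIndex_bot_left, ← Subgroup.relIndex_bot_left, mul_comm]
  exact Subgroup.relIndex_mul_relIndex _ _ _ bot_le inf_le_right

end CocycleExt

theorem baer_units : Module.Baer ℤ (Additive ℂˣ) := by
  have : DivisibleBy (Additive ℂˣ) ℕ := by
    refine divisibleByOfSMulRightSurj _ _ ?_
    intro n hn x
    obtain ⟨z, hz⟩ := IsAlgClosed.exists_pow_nat_eq (x.toMul : ℂ) (Nat.pos_of_ne_zero hn)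
    have hz0 : z ≠ 0 := by
      rintro rfl
      rw [zero_pow hn] at hz
      exact x.toMul.ne_zero hz.symm
    refine ⟨Additive.ofMul (Units.mk0 z hz0), ?_⟩
    change Additive.ofMul ((Units.mk0 z hz0) ^ n) = x
    apply Additive.toMul.injective
    ext
    simpa using hz
  have : DivisibleBy (Additive ℂˣ) ℤ := AddGroup.divisibleByIntOfDivisibleByNat _
  exact Module.Baer.of_divisible _

theorem extend_char {M N : Type} [CommGroup M] [CommGroup N] (i : M →* N)
    (hi : Function.Injective i) (χ : M →* ℂˣ) : ∃ ψ : N →* ℂˣ, ∀ m, ψ (i m) = χ m := by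
  obtain ⟨h, hh⟩ := baer_units.extension_property_addMonoidHom (MonoidHom.toAdditive i) hi
    (MonoidHom.toAdditive χ)
  refine ⟨MonoidHom.toAdditive.symm h, fun m => ?_⟩
  exact congrArg Additive.toMul (DFunLike.congr_fun hh (Additive.ofMul m))

open groupCohomology in
/-- universal cocycle -/
noncomputable def univCocycle (G : Type) [Group G] :
    TrivCocycle G (Multiplicative (cocycles₂ (Rep.trivial ℤ G (Additive ℂˣ))) →* ℂˣ) where
  c g h := 
    { toFun := fun f => Additive.toMul (α := ℂˣ) ((Multiplicative.toAdd f).1 (g, h))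
      map_one' := rfl
      map_mul' := fun _ _ => rfl }
  coc g h j := by
    refine MonoidHom.ext fun f => ?_
    exact congrArg (Additive.toMul (α := ℂˣ)) ((mem_cocycles₂_iff _).1 (Multiplicative.toAdd f).2 g h j)

open groupCohomology in
theorem coboundary_of_trivial (G : Type) [Group G]
    (f : cocycles₂ (Rep.trivial ℤ G (Additive ℂˣ)))
    (hf : ∀ a ∈ (commutator (CocycleExt (univCocycle G))).comap (CocycleExt.incl (univCocycle G)),
      a (Multiplicative.ofAdd f) = 1) : ⇑f ∈ coboundaries₂ (Rep.trivial ℤ G (Additive ℂˣ)) := by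
  set u := univCocycle G
  set K := (commutator (CocycleExt u)).comap (CocycleExt.incl u) with hK
  let ev := MonoidHom.eval (M := Multiplicative (cocycles₂ (Rep.trivial ℤ G (Additive ℂˣ))))
    (N := ℂˣ) (Multiplicative.ofAdd f)
  let χ := QuotientGroup.lift K ev hf
  let i : (_ ⧸ K) →* Abelianization (CocycleExt u) :=
    QuotientGroup.map K (commutator (CocycleExt u)) (CocycleExt.incl u) le_rfl
  have hi : Function.Injective i := by
    rw [injective_iff_map_eq_one]
    intro a
    induction a using QuotientGroup.induction_on with
    | H a =>
      intro h
      rw [QuotientGroup.eq_one_iff]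
      exact (QuotientGroup.eq_one_iff (N := commutator (CocycleExt u)) (CocycleExt.incl u a)).1 h
  obtain ⟨ψ, hψ⟩ := extend_char i hi χ
  have key : ∀ g h : G, ψ (Abelianization.of (⟨1, g⟩ : CocycleExt u)) *
      ψ (Abelianization.of (⟨1, h⟩ : CocycleExt u)) =
      (u.c g h) (Multiplicative.ofAdd f) * ψ (Abelianization.of (⟨1, g * h⟩ : CocycleExt u)) := by
    intro g h
    have h1 : (⟨1, g⟩ : CocycleExt u) * ⟨1, h⟩ = CocycleExt.incl u (u.c g h) * ⟨1, g * h⟩ := by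
      exact CocycleExt.section_mul u g h
    rw [← map_mul, ← map_mul, h1, map_mul, map_mul]
    congr 1
    exact hψ (QuotientGroup.mk (u.c g h))
  refine ⟨fun g => Additive.ofMul (ψ (Abelianization.of (⟨1, g⟩ : CocycleExt u))), ?_⟩
  refine funext fun gh => ?_
  obtain ⟨g, h⟩ := gh
  change Additive.ofMul (ψ (Abelianization.of (⟨1, h⟩ : CocycleExt u))) - 
    Additive.ofMul (ψ (Abelianization.of (⟨1, g * h⟩ : CocycleExt u))) +
    Additive.ofMul (ψ (Abelianization.of (⟨1, g⟩ : CocycleExt u))) = f.1 (g, h)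
  rw [sub_add_eq_add_sub, sub_eq_iff_eq_add, add_comm]
  exact key g h

open groupCohomology in
theorem exists_ext (G : Type) [Group G] : ∃ (E : Type) (_ : Group E) (π : E →* G),
    Function.Surjective π ∧ π.ker ≤ Subgroup.center E ∧
    (Finite (commutator E) →
      Nat.card (schurMultiplier G) * Nat.card (commutator G) ≤ Nat.card (commutator E)) := by
  refine ⟨CocycleExt (univCocycle G), inferInstance, CocycleExt.proj _,
    CocycleExt.proj_surjective _, CocycleExt.ker_le_center _, fun hfin => ?_⟩
  rw [← CocycleExt.card_commutator]
  apply Nat.mul_le_mul_right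
  set u := univCocycle G
  set K := (commutator (CocycleExt u)).comap (CocycleExt.incl u) with hK
  have : Finite K := by
    refine Finite.of_injective (β := commutator (CocycleExt u))
      (fun x => ⟨CocycleExt.incl u x.1, x.2⟩) ?_
    intro x y h
    exact Subtype.ext (CocycleExt.incl_injective u (congrArg Subtype.val h))
  have hne : NeZero (Monoid.exponent K : ℂ) := ⟨by
    exact_mod_cast Monoid.exponent_ne_zero_of_finite⟩
  have hne' : NeZero (Monoid.exponent K) := ⟨Monoid.exponent_ne_zero_of_finite⟩
  have hcard : Nat.card (K →* ℂˣ) = Nat.card K :=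
    CommGroup.card_monoidHom_of_hasEnoughRootsOfUnity K ℂ
  have : Finite (K →* ℂˣ) := Nat.finite_of_card_ne_zero (by rw [hcard]; exact Nat.card_pos.ne')
  rw [← hcard]
  let Φ : cocycles₂ (Rep.trivial ℤ G (Additive ℂˣ)) → (K →* ℂˣ) := fun f =>
    (MonoidHom.eval (Multiplicative.ofAdd f)).comp K.subtype
  have hs : ∀ h : schurMultiplier G, ∃ f, H2π (Rep.trivial ℤ G (Additive ℂˣ)) f = h := by
    intro h
    induction h using H2_induction_on with
    | h x => exact ⟨x, rfl⟩
  choose s hs using hs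
  refine Nat.card_le_card_of_injective (fun h => Φ (s h)) ?_
  intro h h' hh
  rw [← hs h, ← hs h']
  refine (H2π_eq_iff _ _).2 ?_
  refine coboundary_of_trivial G (s h - s h') ?_
  intro a ha
  have := DFunLike.congr_fun hh (⟨a, ha⟩ : K)
  have h2 : a (Multiplicative.ofAdd (s h)) = a (Multiplicative.ofAdd (s h')) := this
  have h3 : a (Multiplicative.ofAdd (s h - s h')) =
      a (Multiplicative.ofAdd (s h)) / a (Multiplicative.ofAdd (s h')) := map_div a _ _
  exact h3.trans (by rw [h2, div_self'])

section GroupPart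

open scoped commutatorElement

/-- The lower central series of the whole group, `gam E n = γ_{n+1}(E)`. -/
abbrev gam (E : Type) [Group E] (n : ℕ) : Subgroup E := (⊤ : Subgroup E).lowerCentralSeries n

variable {E : Type} [Group E]

/-- The elements commuting with `x` modulo `D`. -/
def centMod (D : Subgroup E) [D.Normal] (x : E) : Subgroup E :=
  (Subgroup.centralizer {(x : E ⧸ D)}).comap (QuotientGroup.mk' D)

theorem mk_comm_iff (D : Subgroup E) [D.Normal] (w x : E) :
    ⁅w, x⁆ ∈ D ↔ (w : E ⧸ D) * x = x * w := by
  rw [← QuotientGroup.eq_one_iff, ← commutatorElement_eq_one_iff_mul_comm]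
  exact Iff.rfl

theorem mem_centMod {D : Subgroup E} [D.Normal] {x w : E} : w ∈ centMod D x ↔ ⁅w, x⁆ ∈ D := by
  rw [mk_comm_iff, centMod, Subgroup.mem_comap, Subgroup.mem_centralizer_singleton_iff]
  exact Iff.rfl

theorem comm_mem_symm {D : Subgroup E} {x w : E} (h : ⁅w, x⁆ ∈ D) : ⁅x, w⁆ ∈ D := by
  rw [← commutatorElement_inv]; exact D.inv_mem h

theorem gam_comm_mem {n : ℕ} {w : E} (hw : w ∈ gam E n) (x : E) : ⁅w, x⁆ ∈ gam E (n + 1) :=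
  Subgroup.commutator_mem_commutator hw (Subgroup.mem_top x)

theorem gam_anti {m n : ℕ} (h : m ≤ n) : gam E n ≤ gam E m :=
  Subgroup.lowerCentralSeries_antitone _ h

theorem gam_succ_le {n : ℕ} {D : Subgroup E} (h : ∀ w ∈ gam E n, ∀ x, ⁅w, x⁆ ∈ D) :
    gam E (n + 1) ≤ D := by
  change ⁅gam E n, ⊤⁆ ≤ D
  rw [Subgroup.commutator_le]
  exact fun w hw x _ => h w hw x

theorem hall_witt_aux (u x s : E) :
    ⁅⁅u, x⁆, s⁆ = u * (s * ⁅⁅s⁻¹, u⁻¹⁆, x⁆ * s⁻¹ * (x * ⁅⁅x⁻¹, s⁆, u⁻¹⁆ * x⁻¹))⁻¹ * u⁻¹ := by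
  simp only [commutatorElement_def]; group

theorem hall_witt_mem {D : Subgroup E} [hD : D.Normal] {u x s : E} (h1 : ⁅⁅s⁻¹, u⁻¹⁆, x⁆ ∈ D)
    (h2 : ⁅⁅x⁻¹, s⁆, u⁻¹⁆ ∈ D) : ⁅⁅u, x⁆, s⁆ ∈ D := by
  rw [hall_witt_aux]
  exact hD.conj_mem _ (D.inv_mem (D.mul_mem (hD.conj_mem _ h1 _) (hD.conj_mem _ h2 _))) _

theorem gam_gam_comm {b : ℕ} : ∀ {a : ℕ} {x y : E}, x ∈ gam E a → y ∈ gam E b →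
    ⁅x, y⁆ ∈ gam E (a + b + 1) := by
  induction b with
  | zero => intro a x y hx _; exact gam_comm_mem hx y
  | succ b ih =>
    intro a x y hx hy
    have : gam E (b + 1) ≤ centMod (gam E (a + (b + 1) + 1)) x := by
      apply gam_succ_le
      intro w hw g
      rw [mem_centMod]
      apply hall_witt_mem
      · exact gam_comm_mem (ih (inv_mem hx) (inv_mem hw)) g
      · have := ih (a := a + 1) (comm_mem_symm (gam_comm_mem hx g⁻¹)) (inv_mem hw)
        rwa [show a + (b + 1) + 1 = a + 1 + b + 1 by ring]
    exact comm_mem_symm (mem_centMod.1 (this hy))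

theorem normal_between {m : ℕ} {D : Subgroup E} (h1 : gam E (m + 1) ≤ D) (h2 : D ≤ gam E m) :
    D.Normal := by
  rw [← Subgroup.commutator_top_right_le_iff, Subgroup.commutator_le]
  exact fun w hw x _ => h1 (gam_comm_mem (h2 hw) x)

/-- `w ↦ ⁅w, x⁆` modulo `D`. -/
def commHom (m : ℕ) (D : Subgroup E) [D.Normal] (h : gam E (m + 2) ≤ D) (x : E) :
    gam E m →* E ⧸ D where
  toFun w := QuotientGroup.mk ⁅(w : E), x⁆
  map_one' := by simp
  map_mul' w w' := by
    have h1 : ⁅⁅(w' : E), x⁆, (w : E)⁆ ∈ D := h (gam_comm_mem (gam_comm_mem w'.2 x) _)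
    have h2 : ⁅⁅(w' : E), x⁆, ⁅(w : E), x⁆⁆ ∈ D := h (gam_comm_mem (gam_comm_mem w'.2 x) _)
    rw [mk_comm_iff] at h1 h2
    have : ⁅((w * w' : gam E m) : E), x⁆ = (w : E) * ⁅(w' : E), x⁆ * (w : E)⁻¹ * ⁅(w : E), x⁆ := by
      simp only [commutatorElement_def, Subgroup.coe_mul]; group
    rw [this]
    simp only [QuotientGroup.mk_mul, QuotientGroup.mk_inv] at h1 h2 ⊢
    rw [← h1, mul_inv_cancel_right, h2]

/-- The commutators `⁅w, x⁆` with `w ∈ γ_{m+1}` and `x ∈ S`. -/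
def commGen (m : ℕ) (S : Set E) : Subgroup E :=
  Subgroup.closure {e | ∃ w ∈ gam E m, ∃ x ∈ S, e = ⁅w, x⁆}

theorem commGen_le (m : ℕ) (S : Set E) : commGen m S ≤ gam E (m + 1) := by
  rw [commGen, Subgroup.closure_le]
  rintro _ ⟨w, hw, x, -, rfl⟩
  exact gam_comm_mem hw x

theorem mem_commGen {m : ℕ} {S : Set E} {w x : E} (hw : w ∈ gam E m) (hx : x ∈ S) :
    ⁅w, x⁆ ∈ commGen m S := Subgroup.subset_closure ⟨w, hw, x, hx, rfl⟩

theorem commGen_mono {m : ℕ} {S T : Set E} (h : S ⊆ T) : commGen m S ≤ commGen m T := by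
  apply Subgroup.closure_mono
  rintro _ ⟨w, hw, x, hx, rfl⟩
  exact ⟨w, hw, x, h hx, rfl⟩

theorem commGen_union (m : ℕ) (S T : Set E) : commGen m (S ∪ T) = commGen m S ⊔ commGen m T := by
  rw [commGen, commGen, commGen, ← Subgroup.closure_union]
  congr 1
  ext e
  constructor
  · rintro ⟨w, hw, x, hx | hx, rfl⟩
    · exact Or.inl ⟨w, hw, x, hx, rfl⟩
    · exact Or.inr ⟨w, hw, x, hx, rfl⟩
  · rintro (⟨w, hw, x, hx, rfl⟩ | ⟨w, hw, x, hx, rfl⟩)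
    · exact ⟨w, hw, x, Or.inl hx, rfl⟩
    · exact ⟨w, hw, x, Or.inr hx, rfl⟩

theorem relIndex_step (m : ℕ) (D : Subgroup E) [D.Normal] (h : gam E (m + 2) ≤ D) (x : E)
    (W : Subgroup E) (hW : ∀ w ∈ W, ⁅w, x⁆ ∈ D) :
    D.relIndex (D ⊔ commGen m {x}) ∣ W.relIndex (gam E m) := by
  have h1 : (D ⊔ commGen m {x}).map (QuotientGroup.mk' D) ≤ (commHom m D h x).range := by
    rw [Subgroup.map_sup, sup_le_iff]
    constructor
    · rw [QuotientGroup.map_mk'_self]; exact bot_le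
    · rw [commGen, MonoidHom.map_closure, Subgroup.closure_le]
      rintro _ ⟨_, ⟨w, hw, y, hy, rfl⟩, rfl⟩
      rw [Set.mem_singleton_iff] at hy
      subst hy
      exact ⟨⟨w, hw⟩, rfl⟩
  have h2 : D.relIndex (D ⊔ commGen m {x}) =
      Nat.card ((D ⊔ commGen m {x}).map (QuotientGroup.mk' D)) := by
    rw [← Subgroup.relIndex_ker, QuotientGroup.ker_mk']
  rw [h2]
  refine (Subgroup.card_dvd_of_le h1).trans ?_
  rw [← Subgroup.index_ker]
  refine Subgroup.index_dvd_of_le ?_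
  intro w hw
  rw [MonoidHom.mem_ker]
  exact (QuotientGroup.eq_one_iff _).2 (hW _ hw)

theorem relIndex_chain (m : ℕ) (D : Subgroup E) (h : gam E (m + 2) ≤ D) (h' : D ≤ gam E (m + 1))
    (W : Subgroup E) (T : Finset E) (hW : ∀ x ∈ T, ∀ w ∈ W, ⁅w, x⁆ ∈ D) :
    D.relIndex (D ⊔ commGen m (T : Set E)) ∣ (W.relIndex (gam E m)) ^ T.card := by
  classical
  induction T using Finset.induction_on with
  | empty => simp [commGen]
  | insert x T hx ih =>
    have ih := ih (fun y hy => hW y (Finset.mem_insert_of_mem hy))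
    rw [Finset.card_insert_of_notMem hx, pow_succ, Finset.coe_insert, Set.insert_eq, Set.union_comm,
      commGen_union, ← sup_assoc]
    have hle : D ⊔ commGen m (T : Set E) ≤ gam E (m + 1) := sup_le h' (commGen_le _ _)
    have := normal_between (h.trans le_sup_left) hle
    rw [← Subgroup.relIndex_mul_relIndex D (D ⊔ commGen m (T : Set E)) _ le_sup_left le_sup_left]
    refine mul_dvd_mul ih (relIndex_step m _ (h.trans le_sup_left) x W ?_)
    exact fun w hw => le_sup_left (α := Subgroup E) (hW x (Finset.mem_insert_self _ _) w hw)

/-- `u` is a commutator expression of weight `m + 1` in `J`. -/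
def GoodComm (m : ℕ) (J : Set E) (u : E) : Prop :=
  u ∈ gam E m ∧ ∀ n, ∀ y ∈ gam E n, ⁅u, y⁆ ∈ gam E (m + n + 2) ⊔ commGen (m + n) J

theorem D_normal (m : ℕ) (J : Set E) : (gam E (m + 2) ⊔ commGen m J).Normal :=
  normal_between le_sup_left (sup_le (gam_anti (by omega)) (commGen_le m J))

theorem GoodComm.base (x : E) : GoodComm 0 {x} x := by
  refine ⟨Subgroup.mem_top _, fun n y hy => ?_⟩
  rw [zero_add]
  exact le_sup_right (α := Subgroup E) (comm_mem_symm (mem_commGen hy rfl))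

theorem GoodComm.step {m : ℕ} {J : Set E} {u : E} (h : GoodComm m J u) (x : E) :
    GoodComm (m + 1) (insert x J) ⁅u, x⁆ := by
  refine ⟨gam_comm_mem h.1 x, fun n y hy => ?_⟩
  have hN := D_normal (E := E) (m + 1 + n) (insert x J)
  apply hall_witt_mem
  · apply le_sup_right (α := Subgroup E)
    refine mem_commGen ?_ (Set.mem_insert _ _)
    have := gam_gam_comm (inv_mem hy) (inv_mem h.1)
    rwa [show m + 1 + n = n + m + 1 by ring]
  · have h1 := h.2 (n + 1) ⁅x⁻¹, y⁆ (comm_mem_symm (gam_comm_mem hy x⁻¹))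
    rw [show m + (n + 1) = m + 1 + n by ring] at h1
    have h2 := sup_le_sup_left (commGen_mono (m := m + 1 + n) (Set.subset_insert x J))
      (gam E (m + 1 + n + 2)) h1
    have h3 := hN.conj_mem _ h2 u⁻¹
    have h4 : ⁅⁅x⁻¹, y⁆, u⁻¹⁆ = u⁻¹ * ⁅u, ⁅x⁻¹, y⁆⁆ * u⁻¹⁻¹ := by
      simp only [commutatorElement_def]; group
    rwa [h4]

variable {G : Type} [Group G] (π : E →* G) (hs : Function.Surjective π)
  (hk : π.ker ≤ Subgroup.center E)

include hk in
theorem ker_comm {w : E} (hw : w ∈ π.ker) (x : E) (D : Subgroup E) : ⁅w, x⁆ ∈ D := by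
  have := Subgroup.mem_center_iff.1 (hk hw) x
  rw [commutatorElement_eq_one_iff_mul_comm.2 this.symm]
  exact D.one_mem

include hs in
theorem map_gam (n : ℕ) : (gam E n).map π = gam G n := by
  rw [Subgroup.map_lowerCentralSeries, ← MonoidHom.range_eq_map, MonoidHom.range_eq_top.2 hs]

include hs in
theorem comap_gam (n : ℕ) : (gam G n).comap π = gam E n ⊔ π.ker := by
  rw [← map_gam π hs, Subgroup.comap_map_eq]

include hs hk in
theorem comap_comm {n : ℕ} {w : E} (hw : π w ∈ gam G n) (x : E) : ⁅w, x⁆ ∈ gam E (n + 1) := by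
  rw [← Subgroup.mem_comap, comap_gam π hs] at hw
  have : gam E n ⊔ π.ker ≤ centMod (gam E (n + 1)) x := by
    rw [sup_le_iff]
    exact ⟨fun w hw => mem_centMod.2 (gam_comm_mem hw x),
      fun w hw => mem_centMod.2 (ker_comm π hk hw x _)⟩
  exact mem_centMod.1 (this hw)

include hk in
theorem goodComm_gen (X : Finset E) (hX : Subgroup.closure (X : Set E) ⊔ π.ker = ⊤) (m : ℕ) :
    gam E m ≤ Subgroup.closure {u | ∃ J : Finset E, J ⊆ X ∧ J.card ≤ m + 1 ∧
      GoodComm m (J : Set E) u} ⊔ gam E (m + 1) ⊔ π.ker := by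
  classical
  induction m with
  | zero =>
    change ⊤ ≤ _
    rw [← hX]
    refine sup_le_sup_right (le_trans ?_ le_sup_left) _
    apply Subgroup.closure_mono
    intro x hx
    refine ⟨{x}, by simpa using hx, by simp, ?_⟩
    rw [Finset.coe_singleton]
    exact GoodComm.base x
  | succ m ih =>
    refine le_trans ?_ le_sup_left
    set S := {u : E | ∃ J : Finset E, J ⊆ X ∧ J.card ≤ m + 1 + 1 ∧
      GoodComm (m + 1) (J : Set E) u} with hS
    set D := Subgroup.closure S ⊔ gam E (m + 1 + 1) with hD
    have hle : D ≤ gam E (m + 1) := by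
      refine sup_le ?_ (gam_anti (by omega))
      rw [Subgroup.closure_le]
      rintro u ⟨J, -, -, h⟩
      exact h.1
    have hN : D.Normal := normal_between le_sup_right hle
    apply gam_succ_le
    intro w hw x
    have h1 : Subgroup.closure {u : E | ∃ J : Finset E, J ⊆ X ∧ J.card ≤ m + 1 ∧
      GoodComm m (J : Set E) u} ⊔ gam E (m + 1) ⊔ π.ker ≤ centMod D x := by
      refine sup_le (sup_le ?_ ?_) ?_
      · rw [Subgroup.closure_le]
        rintro u ⟨J, hJ, hJc, hu⟩
        have : Subgroup.closure (X : Set E) ⊔ π.ker ≤ centMod D u := by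
          refine sup_le ?_ (fun w hw => mem_centMod.2 (ker_comm π hk hw _ _))
          rw [Subgroup.closure_le]
          intro y hy
          refine mem_centMod.2 (comm_mem_symm ?_)
          refine le_sup_left (α := Subgroup E) (Subgroup.subset_closure ?_)
          refine ⟨insert y J, ?_, ?_, ?_⟩
          · exact Finset.insert_subset hy hJ
          · exact (Finset.card_insert_le _ _).trans (by omega)
          · rw [Finset.coe_insert]; exact hu.step y
        rw [hX] at this
        exact mem_centMod.2 (comm_mem_symm (mem_centMod.1 (this (Subgroup.mem_top x))))
      · intro v hv
        exact mem_centMod.2 (le_sup_right (α := Subgroup E) (gam_comm_mem hv x))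
      · intro v hv
        exact mem_centMod.2 (ker_comm π hk hv _ _)
    exact mem_centMod.1 (h1 (ih hw))

theorem gam_stable {m : ℕ} (h : gam G m ≤ gam G (m + 1)) (k : ℕ) : gam G m ≤ gam G (m + k) := by
  induction k with
  | zero => exact le_rfl
  | succ k ih =>
    refine h.trans ?_
    exact Subgroup.commutator_mono ih le_rfl

include hs hk in
theorem exists_goodComm (X : Finset E) (hX : Subgroup.closure (X : Set E) ⊔ π.ker = ⊤) (m c : ℕ)
    (hc : gam G c = ⊥) (hm : m ≤ c) (hne : gam G m ≠ ⊥) :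
    ∃ u, ∃ J : Finset E, J ⊆ X ∧ J.card ≤ m + 1 ∧ GoodComm m (J : Set E) u ∧
      π u ∉ gam G (m + 1) := by
  by_contra! hcon
  apply hne
  have h1 : gam E m ≤ (gam G (m + 1)).comap π := by
    refine (goodComm_gen π hk X hX m).trans (sup_le (sup_le ?_ ?_) ?_)
    · rw [Subgroup.closure_le]
      rintro u ⟨J, h1, h2, h3⟩
      exact hcon u J h1 h2 h3
    · rw [comap_gam π hs]; exact le_sup_left
    · rw [comap_gam π hs]; exact le_sup_right
  rw [← Subgroup.map_le_iff_le_comap, map_gam π hs] at h1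
  have h2 := gam_stable h1 (c - m)
  rw [Nat.add_sub_cancel' hm, hc] at h2
  exact le_bot_iff.1 h2

include hs hk in
theorem relIndex_bound (p : ℕ) (hp : p.Prime) (X : Finset E)
    (hX : Subgroup.closure (X : Set E) ⊔ π.ker = ⊤) (m c k : ℕ)
    (hc : gam G c = ⊥) (hm : m ≤ c) (hne : gam G m ≠ ⊥)
    (hV : (gam G (m + 1)).relIndex (gam G m) = p ^ k) :
    ∃ e, (gam E (m + 2)).relIndex (gam E (m + 1)) ∣ p ^ e ∧ e + (X.card - (m + 1)) ≤ X.card * k := by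
  classical
  obtain ⟨u, J, hJX, hJ, hu, huG⟩ := exists_goodComm π hs hk X hX m c hc hm hne
  set W := (gam G (m + 1)).comap π with hWdef
  have hW : W.relIndex (gam E m) = p ^ k := by
    rw [hWdef, Subgroup.relIndex_comap, map_gam π hs, hV]
  set D := gam E (m + 2) ⊔ commGen m (J : Set E) with hD
  have hDN : D.Normal := D_normal m _
  have hDle : D ≤ gam E (m + 1) := sup_le (gam_anti (by omega)) (commGen_le m _)
  have hWx : ∀ x, ∀ w ∈ W, ⁅w, x⁆ ∈ gam E (m + 2) := fun x w hw => comap_comm π hs hk hw x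
  have h1 : (gam E (m + 2)).relIndex D ∣ (p ^ k) ^ J.card := by
    rw [← hW]
    exact relIndex_chain m _ le_rfl (gam_anti (by omega)) W J (fun x _ => hWx x)
  set W2 := W ⊔ Subgroup.zpowers u with hW2
  have h2 : D.relIndex (D ⊔ commGen m ((X \ J : Finset E) : Set E)) ∣
      (W2.relIndex (gam E m)) ^ (X \ J).card := by
    refine relIndex_chain m D le_sup_left hDle W2 (X \ J) ?_
    intro x _ w hw
    have : W2 ≤ centMod D x := by
      refine sup_le (fun w hw => mem_centMod.2 (le_sup_left (α := Subgroup E) (hWx x w hw))) ?_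
      rw [Subgroup.zpowers_le]
      exact mem_centMod.2 (hu.2 0 x (Subgroup.mem_top x))
    exact mem_centMod.1 (this hw)
  have h3 : D ⊔ commGen m ((X \ J : Finset E) : Set E) = gam E (m + 1) := by
    refine le_antisymm (sup_le hDle (commGen_le _ _)) ?_
    have hN : (D ⊔ commGen m ((X \ J : Finset E) : Set E)).Normal :=
      normal_between (m := m + 1) (le_sup_left.trans le_sup_left) (sup_le hDle (commGen_le _ _))
    apply gam_succ_le
    intro w hw x
    have : Subgroup.closure (X : Set E) ⊔ π.ker ≤
        centMod (D ⊔ commGen m ((X \ J : Finset E) : Set E)) w := by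
      refine sup_le ?_ (fun w hw => mem_centMod.2 (ker_comm π hk hw _ _))
      rw [Subgroup.closure_le]
      intro y hy
      refine mem_centMod.2 (comm_mem_symm ?_)
      by_cases hyJ : y ∈ J
      · exact le_sup_left (α := Subgroup E) (le_sup_right (α := Subgroup E)
          (mem_commGen hw (Finset.mem_coe.2 hyJ)))
      · exact le_sup_right (α := Subgroup E)
          (mem_commGen hw (Finset.mem_coe.2 (Finset.mem_sdiff.2 ⟨hy, hyJ⟩)))
    rw [hX] at this
    exact comm_mem_symm (mem_centMod.1 (this (Subgroup.mem_top x)))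
  rw [h3] at h2
  have h4 : W.relIndex (W2 ⊓ gam E m) * W2.relIndex (gam E m) = p ^ k := by
    rw [Subgroup.relIndex_inf_mul_relIndex, inf_of_le_left le_sup_left, hW]
  obtain ⟨j, hjk, hj⟩ := (Nat.dvd_prime_pow hp).1 (Dvd.intro_left _ h4)
  have hjk' : j ≠ k := by
    rintro rfl
    rw [hj] at h4
    have h5 : W.relIndex (W2 ⊓ gam E m) = 1 :=
      Nat.eq_of_mul_eq_mul_right (pow_pos hp.pos j) (by rw [h4, one_mul])
    rw [Subgroup.relIndex_eq_one] at h5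
    exact huG (h5 ⟨le_sup_right (α := Subgroup E) (Subgroup.mem_zpowers u), hu.1⟩)
  have hcard : (X \ J).card + J.card = X.card := Finset.card_sdiff_add_card_eq_card hJX
  refine ⟨k * J.card + j * (X \ J).card, ?_, ?_⟩
  · rw [← Subgroup.relIndex_mul_relIndex _ D _ le_sup_left hDle, pow_add, pow_mul, pow_mul]
    rw [hj] at h2
    exact mul_dvd_mul h1 h2
  · rw [← hcard]
    have h6 : (j + 1) * (X \ J).card ≤ k * (X \ J).card := Nat.mul_le_mul_right _ (by omega)
    have h7 : (X \ J).card + J.card - (m + 1) ≤ (X \ J).card := by omega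
    calc _ ≤ k * J.card + j * (X \ J).card + (X \ J).card := by omega
      _ ≤ k * J.card + k * (X \ J).card := by linarith
      _ = _ := by ring

end GroupPart

section GroupPart2
open scoped commutatorElement
variable {E : Type} [Group E]

theorem relIndex_closure_dvd {τ : Type} (m : ℕ) (e : τ → E) (k : τ → ℕ) (he : ∀ t, e t ∈ gam E m)
    (hk : ∀ t, e t ^ k t ∈ gam E (m + 1)) (T : Finset τ) :
    (gam E (m + 1)).relIndex (gam E (m + 1) ⊔ Subgroup.closure (e '' (T : Set τ))) ∣
      ∏ t ∈ T, k t := by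
  classical
  induction T using Finset.induction_on with
  | empty => simp
  | insert x T hx ih =>
    rw [Finset.prod_insert hx, mul_comm, Finset.coe_insert, Set.image_insert_eq, Set.insert_eq,
      Set.union_comm, Subgroup.closure_union, ← sup_assoc]
    set D := gam E (m + 1) ⊔ Subgroup.closure (e '' (T : Set τ)) with hD
    have hle : D ≤ gam E m := by
      refine sup_le (gam_anti (by omega)) ?_
      rw [Subgroup.closure_le]
      rintro _ ⟨t, -, rfl⟩
      exact he t
    have hN : D.Normal := normal_between le_sup_left hle
    rw [← Subgroup.relIndex_mul_relIndex (gam E (m + 1)) D _ le_sup_left le_sup_left]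
    refine mul_dvd_mul ih ?_
    have h2 : D.relIndex (D ⊔ Subgroup.closure {e x}) =
        Nat.card ((D ⊔ Subgroup.closure {e x}).map (QuotientGroup.mk' D)) := by
      rw [← Subgroup.relIndex_ker, QuotientGroup.ker_mk']
    have h3 : (D ⊔ Subgroup.closure {e x}).map (QuotientGroup.mk' D) ≤
        Subgroup.zpowers (QuotientGroup.mk' D (e x)) := by
      rw [Subgroup.map_sup, QuotientGroup.map_mk'_self, MonoidHom.map_closure, bot_sup_eq,
        Set.image_singleton, Subgroup.zpowers_eq_closure]
    rw [h2]
    refine (Subgroup.card_dvd_of_le h3).trans ?_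
    rw [Nat.card_zpowers, orderOf_dvd_iff_pow_eq_one, ← map_pow]
    exact (QuotientGroup.eq_one_iff _).2 (le_sup_left (α := Subgroup E) (hk x))

variable {G : Type} [Group G] (π : E →* G) (hs : Function.Surjective π)
  (hk : π.ker ≤ Subgroup.center E)

include hs hk in
theorem gam_one_le {ι : Type} [Fintype ι] [LinearOrder ι] (x : ι → E)
    (hx : Subgroup.closure (Set.range x) ⊔ (gam G 1).comap π = ⊤) :
    gam E 1 ≤ gam E 2 ⊔ Subgroup.closure ((fun t : ι × ι => ⁅x t.1, x t.2⁆) ''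
      ((Finset.univ.filter (fun t : ι × ι => t.1 < t.2) : Finset (ι × ι)) : Set (ι × ι))) := by
  set D := gam E 2 ⊔ Subgroup.closure ((fun t : ι × ι => ⁅x t.1, x t.2⁆) ''
      ((Finset.univ.filter (fun t : ι × ι => t.1 < t.2) : Finset (ι × ι)) : Set (ι × ι))) with hD
  have hle : D ≤ gam E 1 := by
    refine sup_le (gam_anti (by omega)) ?_
    rw [Subgroup.closure_le]
    rintro _ ⟨t, -, rfl⟩
    exact gam_comm_mem (n := 0) (Subgroup.mem_top _) _
  have hN : D.Normal := normal_between (m := 1) le_sup_left hle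
  have hlt : ∀ a b : ι, a < b → ⁅x a, x b⁆ ∈ D := fun a b hab =>
    le_sup_right (α := Subgroup E) (Subgroup.subset_closure ⟨(a, b), by simpa using hab, rfl⟩)
  have h1 : ∀ (a : ι) (y : E), ⁅y, x a⁆ ∈ D := by
    intro a y
    have : Subgroup.closure (Set.range x) ⊔ (gam G 1).comap π ≤ centMod D (x a) := by
      refine sup_le ?_ ?_
      · rw [Subgroup.closure_le]
        rintro _ ⟨b, rfl⟩
        refine mem_centMod.2 ?_
        rcases lt_trichotomy a b with h | h | h
        · exact comm_mem_symm (hlt _ _ h)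
        · subst h; rw [commutatorElement_self]; exact D.one_mem
        · exact hlt _ _ h
      · intro w hw
        exact mem_centMod.2 (le_sup_left (α := Subgroup E) (comap_comm π hs hk hw _))
    rw [hx] at this
    exact mem_centMod.1 (this (Subgroup.mem_top y))
  apply gam_succ_le (n := 0)
  intro w _ y
  have : Subgroup.closure (Set.range x) ⊔ (gam G 1).comap π ≤ centMod D y := by
    refine sup_le ?_ ?_
    · rw [Subgroup.closure_le]
      rintro _ ⟨b, rfl⟩
      exact mem_centMod.2 (comm_mem_symm (h1 b y))
    · intro w hw
      exact mem_centMod.2 (le_sup_left (α := Subgroup E) (comap_comm π hs hk hw _))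
  rw [hx] at this
  exact mem_centMod.1 (this (Subgroup.mem_top w))

theorem prod_min_sq_le {ι : Type} [Fintype ι] [LinearOrder ι] (n : ι → ℕ) :
    (∏ t ∈ Finset.univ.filter (fun t : ι × ι => t.1 < t.2), min (n t.1) (n t.2)) ^ 2 ≤
      (∏ i, n i) ^ (Fintype.card ι - 1) := by
  classical
  have h1 : (∏ t ∈ Finset.univ.filter (fun t : ι × ι => t.1 < t.2), min (n t.1) (n t.2)) ^ 2 ≤
      ∏ t ∈ Finset.univ.filter (fun t : ι × ι => t.1 < t.2), n t.1 * n t.2 := by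
    rw [← Finset.prod_pow]
    refine Finset.prod_le_prod' fun t _ => ?_
    rw [pow_two]
    exact Nat.mul_le_mul (min_le_left _ _) (min_le_right _ _)
  refine h1.trans (le_of_eq ?_)
  have h2 : ∏ t ∈ Finset.univ.filter (fun t : ι × ι => t.1 < t.2), n t.2 =
      ∏ t ∈ Finset.univ.filter (fun t : ι × ι => t.2 < t.1), n t.1 := by
    refine Finset.prod_bij (fun t _ => t.swap) ?_ ?_ ?_ ?_
    · intro t ht; simpa using ht
    · intro a _ b _ h; exact Prod.swap_injective h
    · intro t ht; exact ⟨t.swap, by simpa using ht, by simp⟩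
    · intro t _; rfl
  rw [Finset.prod_mul_distrib, h2, ← Finset.prod_union]
  · have h3 : Finset.univ.filter (fun t : ι × ι => t.1 < t.2) ∪
        Finset.univ.filter (fun t : ι × ι => t.2 < t.1) =
        Finset.univ.filter (fun t : ι × ι => t.2 ≠ t.1) := by
      ext t; simp [ne_comm]
    rw [h3, Finset.prod_filter, Fintype.prod_prod_type, ← Finset.prod_pow]
    refine Finset.prod_congr rfl fun i _ => ?_
    rw [← Finset.prod_filter]
    change ∏ a ∈ Finset.univ.filter (fun a : ι => a ≠ i), n i = _
    rw [Finset.prod_const, Finset.filter_ne', Finset.card_erase_of_mem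
      (Finset.mem_univ _), Finset.card_univ]
  · rw [Finset.disjoint_filter]
    intro t _ h h'
    exact lt_asymm h h'

end GroupPart2

section GroupPart3
open scoped commutatorElement
variable {E : Type} [Group E]

theorem comm_pow_mem (x y : E) (n : ℕ) (h : ⁅x ^ n, y⁆ ∈ gam E 2) : ⁅x, y⁆ ^ n ∈ gam E 2 := by
  have h1 := map_pow (commHom 0 (gam E 2) le_rfl y) ⟨x, Subgroup.mem_top x⟩ n
  have h2 : commHom 0 (gam E 2) le_rfl y (⟨x, Subgroup.mem_top x⟩ ^ n) =
    QuotientGroup.mk ⁅x ^ n, y⁆ := rfl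
  have h3 : commHom 0 (gam E 2) le_rfl y ⟨x, Subgroup.mem_top x⟩ = QuotientGroup.mk ⁅x, y⁆ := rfl
  rw [h2, h3, (QuotientGroup.eq_one_iff _).2 h] at h1
  rw [← QuotientGroup.eq_one_iff, QuotientGroup.mk_pow, ← h1]

theorem card_index_le_rank {G : Type} [Group G] [Finite G] (p : ℕ) (hp : p.Prime)
    {ι : Type} [Fintype ι] (n : ι → ℕ) (hn : ∀ i, p ∣ n i)
    (f : G →* ((i : ι) → Multiplicative (ZMod (n i)))) (hf : Function.Surjective f) :
    Fintype.card ι ≤ Group.rank G := by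
  have : NeZero p := ⟨hp.ne_zero⟩
  let q : ((i : ι) → Multiplicative (ZMod (n i))) →* (ι → Multiplicative (ZMod p)) :=
    MonoidHom.pi fun i => ((ZMod.castHom (hn i) (ZMod p)).toAddMonoidHom.toMultiplicative).comp
      (Pi.evalMonoidHom _ i)
  have hq : Function.Surjective q := by
    intro b
    choose a ha using fun i => ZMod.castHom_surjective (hn i) (Multiplicative.toAdd (b i))
    refine ⟨fun i => Multiplicative.ofAdd (a i), ?_⟩
    funext i
    exact congrArg Multiplicative.ofAdd (ha i)
  have h1 := Group.rank_le_of_surjective (q.comp f) (hq.comp hf)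
  have h2 := card_dvd_exponent_pow_rank' (ι → Multiplicative (ZMod p)) (n := p) (by
    intro g
    funext i
    change g i ^ p = 1
    apply Multiplicative.toAdd.injective
    rw [toAdd_pow, toAdd_one, nsmul_eq_mul, ZMod.natCast_self, zero_mul])
  have h3 : Nat.card (ι → Multiplicative (ZMod p)) = p ^ Fintype.card ι := by
    rw [Nat.card_fun, Nat.card_eq_fintype_card (α := ι)]
    congr 1
    exact Nat.card_zmod p
  rw [h3] at h2
  exact ((Nat.pow_dvd_pow_iff_le_right hp.one_lt).1 h2).trans h1

variable {G : Type} [Group G] (π : E →* G) (hs : Function.Surjective π)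
  (hk : π.ker ≤ Subgroup.center E)

include hs hk in
theorem lam_two [Finite G] (p : ℕ) (hp : p.Prime) (a : ℕ)
    (hcard : Nat.card (Abelianization G) = p ^ a) :
    ∃ N, (gam E 2).relIndex (gam E 1) ∣ N ∧ N ≠ 0 ∧ N ^ 2 ≤ (p ^ a) ^ (Group.rank G - 1) := by
  classical
  have : Finite (Abelianization G) := Quotient.finite _
  obtain ⟨ι, _, n, hn1, ⟨e⟩⟩ := CommGroup.equiv_prod_multiplicative_zmod_of_finite (Abelianization G)
  let _ : LinearOrder ι := linearOrderOfSTO (WellOrderingRel (α := ι))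
  have hprod : ∏ i, n i = p ^ a := by
    rw [← hcard, Nat.card_congr e.toEquiv, Nat.card_pi]
    exact Finset.prod_congr rfl fun i _ => (Nat.card_zmod (n i)).symm
  have hnp : ∀ i, p ∣ n i := by
    intro i
    have : n i ∣ p ^ a := hprod ▸ Finset.dvd_prod_of_mem n (Finset.mem_univ i)
    obtain ⟨j, -, hj⟩ := (Nat.dvd_prime_pow hp).1 this
    have : j ≠ 0 := by
      rintro rfl
      have := hn1 i
      rw [hj] at this; simp at this
    rw [hj]
    exact dvd_pow_self p this
  have hof : Function.Surjective (Abelianization.of : G →* Abelianization G) :=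
    QuotientGroup.mk_surjective
  set g : G →* ((i : ι) → Multiplicative (ZMod (n i))) := e.toMonoidHom.comp Abelianization.of
  have hg : Function.Surjective g := e.surjective.comp hof
  set f : E →* ((i : ι) → Multiplicative (ZMod (n i))) := g.comp π with hfdef
  have hf : Function.Surjective f := hg.comp hs
  have hgk : ∀ w, g w = 1 → w ∈ gam G 1 := by
    intro w hw
    have : Abelianization.of w = 1 := e.injective (by rw [map_one]; exact hw)
    rw [← MonoidHom.mem_ker, Abelianization.ker_of] at this
    exact this
  have hr := card_index_le_rank p hp n hnp g hg
  choose x hx using fun i => hf (Pi.mulSingle i (Multiplicative.ofAdd (1 : ZMod (n i))))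
  have hfk : f.ker ≤ (gam G 1).comap π := fun w hw => hgk _ hw
  have htop : Subgroup.closure (Set.range x) ⊔ (gam G 1).comap π = ⊤ := by
    rw [eq_top_iff]
    refine le_trans ?_ (sup_le_sup_left hfk _)
    rw [← Subgroup.comap_map_eq]
    intro w _
    rw [Subgroup.mem_comap, ← Finset.univ_prod_mulSingle (f w)]
    refine Subgroup.prod_mem _ fun i _ => ?_
    have : NeZero (n i) := ⟨by have := hn1 i; omega⟩
    have h1 : Pi.mulSingle i (f w i) = f (x i ^ (Multiplicative.toAdd (f w i)).val) := by
      rw [map_pow, hx, ← Pi.mulSingle_pow]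
      congr 1
      apply Multiplicative.toAdd.injective
      rw [toAdd_pow, toAdd_ofAdd, nsmul_eq_mul, mul_one, ZMod.natCast_zmod_val]
    rw [h1]
    exact Subgroup.mem_map_of_mem f (Subgroup.pow_mem _ (Subgroup.subset_closure (Set.mem_range_self i)) _)
  have hxn : ∀ (i : ι) (y : E), ⁅x i, y⁆ ^ n i ∈ gam E 2 := by
    intro i y
    apply comm_pow_mem
    refine comap_comm π hs hk (hgk _ ?_) y
    change f (x i ^ n i) = 1
    rw [map_pow, hx, ← Pi.mulSingle_pow, ← Pi.mulSingle_one i]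
    congr 1
    apply Multiplicative.toAdd.injective
    rw [toAdd_pow, toAdd_ofAdd, nsmul_eq_mul, mul_one, ZMod.natCast_self]; rfl
  have hmin : ∀ t : ι × ι, ⁅x t.1, x t.2⁆ ^ (min (n t.1) (n t.2)) ∈ gam E 2 := by
    intro t
    rcases min_choice (n t.1) (n t.2) with h | h
    · rw [h]; exact hxn _ _
    · rw [h, ← commutatorElement_inv, inv_pow]
      exact Subgroup.inv_mem _ (hxn _ _)
  have h1 := gam_one_le π hs hk x htop
  have h2 := relIndex_closure_dvd 1 (fun t : ι × ι => ⁅x t.1, x t.2⁆)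
    (fun t => min (n t.1) (n t.2)) (fun t => gam_comm_mem (n := 0) (Subgroup.mem_top _) _) hmin
    (Finset.univ.filter (fun t : ι × ι => t.1 < t.2))
  have h3 := le_antisymm h1 (sup_le (gam_anti (by omega)) (by
    rw [Subgroup.closure_le]
    rintro _ ⟨t, -, rfl⟩
    exact gam_comm_mem (n := 0) (Subgroup.mem_top _) _))
  rw [← h3] at h2
  refine ⟨_, h2, ?_, ?_⟩
  · refine Finset.prod_ne_zero_iff.2 fun t _ => ?_
    have := hn1 t.1
    have := hn1 t.2
    simp only [ne_eq, Nat.min_eq_zero_iff]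
    omega
  · refine (prod_min_sq_le n).trans ?_
    rw [hprod]
    exact Nat.pow_le_pow_right (pow_pos hp.pos a) (by omega)

end GroupPart3

section FinalPart

theorem card_gam_one (X : Type) [Group X] (j : ℕ) : Nat.card (gam X 1) =
    (∏ m ∈ Finset.range j, (gam X (m + 2)).relIndex (gam X (m + 1))) * Nat.card (gam X (j + 1)) := by
  induction j with
  | zero => simp
  | succ j ih =>
    rw [ih, Finset.prod_range_succ, mul_assoc]
    congr 1
    rw [← Subgroup.relIndex_bot_left, ← Subgroup.relIndex_bot_left, mul_comm]
    exact (Subgroup.relIndex_mul_relIndex ⊥ _ _ bot_le (gam_anti (by omega))).symm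

theorem exists_lift_gen {E G : Type} [Group E] [Group G] [Finite G] (π : E →* G)
    (hs : Function.Surjective π) :
    ∃ X : Finset E, X.card = Group.rank G ∧ Subgroup.closure (X : Set E) ⊔ π.ker = ⊤ := by
  classical
  obtain ⟨S, hS, hS'⟩ := Group.rank_spec G
  refine ⟨S.image (Function.surjInv hs), ?_, ?_⟩
  · rw [Finset.card_image_of_injective _ (Function.injective_surjInv hs), hS]
  · rw [← Subgroup.comap_map_eq, MonoidHom.map_closure, Finset.coe_image, ← Set.image_comp,
      (Function.rightInverse_surjInv hs).comp_eq_id, Set.image_id, hS', Subgroup.comap_top]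

theorem card_comm_bound {E G : Type} [Group E] [Group G] [Finite G] (π : E →* G)
    (hs : Function.Surjective π) (hk : π.ker ≤ Subgroup.center E) (p : ℕ) (hp : p.Prime)
    (n k c : ℕ) (hcard : Nat.card G = p ^ n) (hkk : Nat.card (commutator G) = p ^ k)
    (hc0 : 1 ≤ c) (hcb : gam G c = ⊥) (hcne : ∀ m, m < c → gam G m ≠ ⊥) :
    ∃ N s a : ℕ, Nat.card (commutator E) ∣ p ^ s * N ∧ N ≠ 0 ∧ a + k = n ∧
      N ^ 2 ≤ (p ^ a) ^ (Group.rank G - 1) ∧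
      s + ∑ m ∈ Finset.range (c - 1), (Group.rank G - (m + 2)) ≤ Group.rank G * k := by
  have hkn : p ^ k * Nat.card (Abelianization G) = p ^ n := by
    rw [← hcard, ← hkk, Subgroup.card_eq_card_quotient_mul_card_subgroup (commutator G), mul_comm]
    rfl
  obtain ⟨a, -, ha⟩ := (Nat.dvd_prime_pow hp).1 (Dvd.intro_left _ hkn)
  have hak : a + k = n := by
    rw [ha, ← pow_add] at hkn
    have := Nat.pow_right_injective hp.two_le hkn
    omega
  obtain ⟨N, hN1, hN0, hN2⟩ := lam_two π hs hk p hp a ha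
  obtain ⟨X, hX, hXt⟩ := exists_lift_gen π hs
  have hrel : ∀ m, ∃ j, (gam G (m + 1 + 1)).relIndex (gam G (m + 1)) = p ^ j := by
    intro m
    have h1 : (gam G (m + 1 + 1)).relIndex (gam G (m + 1)) ∣ p ^ n := by
      rw [← hcard]
      exact (Subgroup.relIndex_dvd_card _ _).trans (Subgroup.card_subgroup_dvd_card _)
    obtain ⟨j, -, hj⟩ := (Nat.dvd_prime_pow hp).1 h1
    exact ⟨j, hj⟩
  choose κ hκ using hrel
  have hsum : ∑ m ∈ Finset.range (c - 1), κ m = k := by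
    have h1 := card_gam_one G (c - 1)
    rw [Nat.sub_add_cancel hc0, hcb, Subgroup.card_bot, mul_one] at h1
    have h2 : Nat.card (gam G 1) = p ^ k := hkk
    rw [h2, Finset.prod_congr rfl (fun m _ => hκ m), Finset.prod_pow_eq_pow_sum] at h1
    exact (Nat.pow_right_injective hp.two_le h1).symm
  have hb : ∀ m, m < c - 1 → ∃ e, (gam E (m + 3)).relIndex (gam E (m + 2)) ∣ p ^ e ∧
      e + (X.card - (m + 2)) ≤ X.card * κ m := by
    intro m hm
    exact relIndex_bound π hs hk p hp X hXt (m + 1) c (κ m) hcb (by omega) (hcne _ (by omega)) (hκ m)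
  choose! e he1 he2 using hb
  have hEbot : gam E (c + 1) = ⊥ := by
    have h1 : gam E c ≤ Subgroup.center E := by
      refine le_trans ?_ hk
      have := Subgroup.le_comap_map π (gam E c)
      rw [map_gam π hs, hcb] at this
      exact this
    rw [eq_bot_iff]
    apply gam_succ_le
    intro w hw x
    rw [Subgroup.mem_bot]
    exact commutatorElement_eq_one_iff_mul_comm.2 (Subgroup.mem_center_iff.1 (h1 hw) x).symm
  refine ⟨N, ∑ m ∈ Finset.range (c - 1), e m, a, ?_, hN0, hak, hN2, ?_⟩
  · change Nat.card (gam E 1) ∣ _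
    rw [card_gam_one E c, hEbot, Subgroup.card_bot, mul_one]
    obtain ⟨c', rfl⟩ : ∃ c', c = c' + 1 := ⟨c - 1, by omega⟩
    rw [Finset.prod_range_succ', Nat.add_sub_cancel, ← Finset.prod_pow_eq_pow_sum]
    refine mul_dvd_mul (Finset.prod_dvd_prod_of_dvd _ _ fun m hm => ?_) hN1
    exact he1 m (by simpa using hm)
  · rw [← hsum, Finset.mul_sum, ← Finset.sum_add_distrib]
    refine Finset.sum_le_sum fun m hm => ?_
    rw [← hX]
    exact he2 m (by simpa using hm)

theorem real_bound (p n k c d M N s a : ℕ) (hp : p.Prime) (hd : 1 ≤ d) (hc : 1 ≤ c)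
    (hM : M * p ^ k ≤ p ^ s * N) (hak : a + k = n) (hN : N ^ 2 ≤ (p ^ a) ^ (d - 1))
    (hs : s + ∑ m ∈ Finset.range (c - 1), (d - (m + 2)) ≤ d * k) :
    (M : ℝ) ≤ (p : ℝ) ^ (((d : ℝ) - 1) * ((n : ℝ) + (k : ℝ)) / 2
        - ∑ i ∈ Finset.Icc 2 (min d c), ((d : ℝ) - (i : ℝ))) := by
  have hp0 : (0 : ℝ) < p := by exact_mod_cast hp.pos
  have hp1 : (1 : ℝ) ≤ p := by exact_mod_cast hp.one_lt.le
  set T := ∑ m ∈ Finset.range (c - 1), (d - (m + 2)) with hT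
  have hsumle : ∑ i ∈ Finset.Icc 2 (min d c), ((d : ℝ) - (i : ℝ)) ≤ (T : ℝ) := by
    have h1 : (T : ℝ) = ∑ i ∈ Finset.Icc 2 c, ((d - i : ℕ) : ℝ) := by
      rw [← Finset.Ico_add_one_right_eq_Icc, Finset.sum_Ico_eq_sum_range, hT, Nat.cast_sum]
      refine Finset.sum_congr (by congr 1) fun i _ => ?_
      rw [add_comm]
    rw [h1]
    refine le_trans (Finset.sum_le_sum (g := fun i => ((d - i : ℕ) : ℝ)) fun i hi => ?_)
      (Finset.sum_le_sum_of_subset_of_nonneg (Finset.Icc_subset_Icc_right (min_le_right _ _))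
        (fun _ _ _ => Nat.cast_nonneg _))
    have : i ≤ d := (Finset.mem_Icc.1 hi).2.trans (min_le_left _ _)
    rw [Nat.cast_sub this]
  have hNr : (N : ℝ) ≤ (p : ℝ) ^ ((a : ℝ) * ((d : ℝ) - 1) / 2) := by
    refine le_of_sq_le_sq ?_ (Real.rpow_nonneg hp0.le _)
    rw [← Real.rpow_natCast ((p : ℝ) ^ _) 2, ← Real.rpow_mul hp0.le]
    have h1 : (N : ℝ) ^ 2 ≤ ((p : ℝ) ^ a) ^ (d - 1) := by exact_mod_cast hN
    refine h1.trans (le_of_eq ?_)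
    rw [← pow_mul, ← Real.rpow_natCast]
    congr 1
    push_cast [Nat.cast_sub hd]
    ring
  have hMr : (M : ℝ) * (p : ℝ) ^ (k : ℝ) ≤ (p : ℝ) ^ (s : ℝ) * (N : ℝ) := by
    rw [Real.rpow_natCast, Real.rpow_natCast]; exact_mod_cast hM
  have h2 : (M : ℝ) ≤ (p : ℝ) ^ ((s : ℝ) + (a : ℝ) * ((d : ℝ) - 1) / 2 - (k : ℝ)) := by
    rw [Real.rpow_sub hp0, Real.rpow_add hp0, le_div_iff₀ (Real.rpow_pos_of_pos hp0 _)]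
    exact hMr.trans (mul_le_mul_of_nonneg_left hNr (Real.rpow_nonneg hp0.le _))
  refine h2.trans (Real.rpow_le_rpow_of_exponent_le hp1 ?_)
  have h3 : (s : ℝ) + (T : ℝ) ≤ d * k := by exact_mod_cast hs
  have h4 : (n : ℝ) = a + k := by exact_mod_cast hak.symm
  rw [h4]
  nlinarith

end FinalPart

/-- Theorem 1 (general form): for a non-abelian finite `p`-group of order `p ^ n`,
nilpotency class `c`, derived subgroup of order `p ^ k` and minimal number of
generators `d`, one has
`|M(G)| ≤ p ^ ((d - 1) * (n + k) / 2 - ∑_{i = 2}^{min d c} (d - i))`. -/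
theorem schur_multiplier_bound_of_nilpotencyClass (p n k c d : ℕ) (hp : p.Prime)
    (G : Type) [Group G] [Finite G] [Group.IsNilpotent G]
    (hcard : Nat.card G = p ^ n)
    (hna : ∃ a b : G, a * b ≠ b * a)
    (hc : Group.nilpotencyClass G = c)
    (hk : Nat.card (commutator G) = p ^ k)
    (hd : Group.rank G = d) :
    (Nat.card (schurMultiplier G) : ℝ) ≤
      (p : ℝ) ^ (((d : ℝ) - 1) * ((n : ℝ) + (k : ℝ)) / 2
        - ∑ i ∈ Finset.Icc 2 (min d c), ((d : ℝ) - (i : ℝ))) := by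
  obtain ⟨E, _, π, hs, hz, hM⟩ := exists_ext G
  have hbot : ∀ m, gam G m = ⊥ ↔ c ≤ m := fun m => by
    rw [← hc]; exact Subgroup.lowerCentralSeries_eq_bot_iff_nilpotencyClass_le
  have hc1 : 1 ≤ c := by
    by_contra hcon
    have h0 : gam G 0 = ⊥ := (hbot 0).2 (by omega)
    have h1 : ∀ x : G, x = 1 := fun x => by
      have : x ∈ gam G 0 := Subgroup.mem_top x
      rwa [h0, Subgroup.mem_bot] at this
    obtain ⟨a, b, hab⟩ := hna
    exact hab (by rw [h1 a, h1 b])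
  have hd1 : 1 ≤ d := by
    by_contra hcon
    obtain ⟨S, hS, hS'⟩ := Group.rank_spec G
    have h0 : S = ∅ := Finset.card_eq_zero.1 (by omega)
    rw [h0, Finset.coe_empty, Subgroup.closure_empty] at hS'
    have h1 : ∀ x : G, x = 1 := fun x => by
      have : x ∈ (⊤ : Subgroup G) := Subgroup.mem_top x
      rwa [← hS', Subgroup.mem_bot] at this
    obtain ⟨a, b, hab⟩ := hna
    exact hab (by rw [h1 a, h1 b])
  obtain ⟨N, s, a, h1, h2, h3, h4, h5⟩ := card_comm_bound π hs hz p hp n k c hcard hk hc1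
    ((hbot c).2 le_rfl) (fun m hm h => by have := (hbot m).1 h; omega)
  have hpos : 0 < p ^ s * N := Nat.mul_pos (pow_pos hp.pos s) (Nat.pos_of_ne_zero h2)
  have hfin : Finite (commutator E) := Nat.finite_of_card_ne_zero (ne_zero_of_dvd_ne_zero hpos.ne' h1)
  have hM' := (hM hfin).trans (Nat.le_of_dvd hpos h1)
  rw [hk] at hM'
  rw [hd] at h4 h5
  exact real_bound p n k c d _ N s a hp hd1 hc1 hM' h3 h4 h5
end

section
/- Let p be a prime and G a non-abelian finite p-group of order p^n and nilpotency class c, with derived subgroup of order p^k and minimal number of generators d. If d ≤ c, then |M(G)| ≤ p^{(1/2)(d-1)(n+k) − (1/2)(d-1)(d-2)}. -/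
namespace SchurBound

/-- multiplicative 2-cocycles with values in `ℂˣ`, trivial action. -/
def Z2 (G : Type) [Group G] : Subgroup (G → G → ℂˣ) where
  carrier := {α | ∀ g h k, α (g * h) k * α g h = α h k * α g (h * k)}
  one_mem' := by intro g h k; simp
  mul_mem' := by
    intro a b ha hb g h k
    simp only [Pi.mul_apply]
    rw [mul_mul_mul_comm, ha g h k, hb g h k, mul_mul_mul_comm]
  inv_mem' := by
    intro a ha g h k
    simp only [Pi.inv_apply]
    rw [← mul_inv, ha g h k, mul_inv]

/-- coboundary map. -/
def dd (G : Type) [Group G] : (G → ℂˣ) →* (G → G → ℂˣ) where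
  toFun x := fun g h => x h / x (g * h) * x g
  map_one' := by ext; simp
  map_mul' x y := by
    funext g h
    simp only [Pi.mul_apply, div_eq_mul_inv, mul_inv]
    ac_rfl

def B2 (G : Type) [Group G] : Subgroup (G → G → ℂˣ) := (dd G).range

lemma dd_apply {G : Type} [Group G] (x : G → ℂˣ) (g h : G) :
    dd G x g h = x h / x (g * h) * x g := rfl

lemma B2_le_Z2 (G : Type) [Group G] : B2 G ≤ Z2 G := by
  rintro _ ⟨x, rfl⟩ g h k
  simp only [dd_apply, div_eq_mul_inv, mul_assoc]
  have : ∀ a b c d e f : ℂˣ, a * (b⁻¹ * (c * (d * (c⁻¹ * f)))) = a * (e⁻¹ * (d * (e * (b⁻¹ * f)))) := by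
    intro a b c d e f
    apply Units.ext
    push_cast
    field_simp
  exact this _ _ _ _ _ _

/-- order of the multiplier -/
noncomputable def m (G : Type) [Group G] : ℕ := (B2 G).relIndex (Z2 G)

lemma card_schur (G : Type) [Group G] : Nat.card (schurMultiplier G) = m G := by
  let A := Rep.trivial ℤ G (Additive ℂˣ)
  let φ : Z2 G →* Multiplicative (groupCohomology A 2) :=
    { toFun := fun α => Multiplicative.ofAdd (groupCohomology.H2π A
        ⟨fun x => Additive.ofMul (α.1 x.1 x.2), by
          refine (groupCohomology.mem_cocycles₂_iff (A := A) _).2 ?_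
          intro g h j
          exact congrArg Additive.ofMul (α.2 g h j)⟩)
      map_one' := by
        rw [← ofAdd_zero, ← map_zero (groupCohomology.H2π A).hom]
        rfl
      map_mul' := fun a b => by
        rw [← ofAdd_add, ← map_add]
        rfl }
  have hk : φ.ker = (B2 G).subgroupOf (Z2 G) := by
    ext α
    rw [MonoidHom.mem_ker, Subgroup.mem_subgroupOf]
    change groupCohomology.H2π A _ = 0 ↔ _
    rw [groupCohomology.H2π_eq_zero_iff]
    constructor
    · rintro ⟨x, hx⟩
      refine ⟨fun g => Additive.toMul (x g), ?_⟩
      funext g h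
      exact congrArg Additive.toMul (congrFun hx (g, h))
    · rintro ⟨x, hx⟩
      refine ⟨fun g => Additive.ofMul (x g), ?_⟩
      funext g
      exact congrArg Additive.ofMul (congrFun (congrFun hx g.1) g.2)
  have hs : Function.Surjective φ := by
    intro y
    obtain ⟨x, hx⟩ := (ModuleCat.epi_iff_surjective (groupCohomology.H2π A)).1 inferInstance
      (Multiplicative.toAdd y)
    refine ⟨⟨fun g h => Additive.toMul (x.1 (g, h)), ?_⟩, ?_⟩
    · intro g h k
      exact congrArg Additive.toMul ((groupCohomology.mem_cocycles₂_iff x.1).1 x.2 g h k)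
    · exact congrArg Multiplicative.ofAdd hx
  have := Subgroup.index_ker φ
  rw [hk, MonoidHom.range_eq_top.2 hs, Subgroup.card_top] at this
  exact this.symm

/-- the central extension attached to a cocycle -/
structure Ext {G : Type} [Group G] (α : Z2 G) where
  g : G
  a : ℂˣ

namespace Ext
variable {G : Type} [Group G] (α : Z2 G)

lemma one_left (g : G) : α.1 1 g = α.1 1 1 := by
  have := α.2 1 1 g
  simp only [one_mul, mul_one] at this
  exact (mul_left_cancel this).symm

lemma one_right (g : G) : α.1 g 1 = α.1 1 1 := by
  have := α.2 g 1 1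
  simp only [mul_one] at this
  exact (mul_right_cancel this)

instance : Mul (Ext α) := ⟨fun x y => ⟨x.g * y.g, x.a * y.a * α.1 x.g y.g⟩⟩
instance : One (Ext α) := ⟨⟨1, (α.1 1 1)⁻¹⟩⟩
instance : Inv (Ext α) := ⟨fun x => ⟨x.g⁻¹, (x.a * α.1 x.g⁻¹ x.g * α.1 1 1)⁻¹⟩⟩

variable {α}
lemma ext' {x y : Ext α} (h : x.g = y.g) (h' : x.a = y.a) : x = y := by
  cases x; cases y; simp_all
@[simp] lemma mul_g (x y : Ext α) : (x * y).g = x.g * y.g := rfl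
@[simp] lemma mul_a (x y : Ext α) : (x * y).a = x.a * y.a * α.1 x.g y.g := rfl
@[simp] lemma one_g : (1 : Ext α).g = 1 := rfl
@[simp] lemma one_a : (1 : Ext α).a = (α.1 1 1)⁻¹ := rfl
@[simp] lemma inv_g (x : Ext α) : (x⁻¹).g = x.g⁻¹ := rfl
@[simp] lemma inv_a (x : Ext α) : (x⁻¹).a = (x.a * α.1 x.g⁻¹ x.g * α.1 1 1)⁻¹ := rfl

instance : Group (Ext α) := Group.ofLeftAxioms
  (by
    intro x y z
    apply ext'
    · simp [mul_assoc]
    · simp only [mul_a, mul_g]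
      have := α.2 x.g y.g z.g
      calc _ = x.a * y.a * z.a * (α.1 (x.g * y.g) z.g * α.1 x.g y.g) := by ac_rfl
        _ = _ := by rw [this]; ac_rfl)
  (by
    intro x
    apply ext'
    · simp
    · simp [one_left])
  (by
    intro x
    apply ext'
    · simp
    · simp [mul_assoc, mul_comm])

variable (α)
def π : Ext α →* G where
  toFun := Ext.g
  map_one' := rfl
  map_mul' _ _ := rfl

def ι : ℂˣ →* Ext α where
  toFun a := ⟨1, a * (α.1 1 1)⁻¹⟩
  map_one' := by apply ext' <;> simp
  map_mul' a b := by
    apply ext'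
    · simp
    · simp [mul_assoc, mul_comm, mul_left_comm]

lemma ι_inj : Function.Injective (ι α) := by
  intro a b h
  have := congrArg Ext.a h
  exact mul_right_cancel this

lemma ι_comm (a : ℂˣ) (x : Ext α) : ι α a * x = x * ι α a := by
  apply ext'
  · simp [ι]
  · simp [ι, one_left, one_right, mul_comm]

lemma π_ι (a : ℂˣ) : π α (ι α a) = 1 := rfl

lemma π_eq_iff (x y : Ext α) : π α x = π α y ↔ ∃ a, y = ι α a * x := by
  constructor
  · intro h
    refine ⟨y.a / x.a, ext' ?_ ?_⟩
    · simp [ι]; exact h.symm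
    · simp only [mul_a, ι, MonoidHom.coe_mk, OneHom.coe_mk, one_left]
      apply Units.ext
      push_cast
      field_simp
  · rintro ⟨a, rfl⟩
    simp [π_ι]

/-- the section -/
def σ (g : G) : Ext α := ⟨g, 1⟩
lemma π_σ (g : G) : π α (σ α g) = g := rfl

lemma σ_mul (g h : G) : σ α g * σ α h = ι α (α.1 g h) * σ α (g * h) := by
  apply ext'
  · simp [σ, ι]
  · simp [σ, ι, one_left]

end Ext
end SchurBound
namespace SchurBound
open Ext

section key
variable {G : Type} [Group G]

/-- the pairing with a central element -/
def phi (z : G) : (G → G → ℂˣ) →* (G → ℂˣ) where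
  toFun α := fun g => α g z / α z g
  map_one' := by funext g; simp
  map_mul' a b := by
    funext g
    simp only [Pi.mul_apply]
    exact (div_mul_div_comm _ _ _ _).symm

lemma phi_apply (z : G) (α : G → G → ℂˣ) (g : G) : phi z α g = α g z / α z g := rfl

lemma comm_rel (α : Z2 G) {z : G} (hz : ∀ g, g * z = z * g) (e : Ext α) :
    e * σ α z = ι α (phi z α.1 (π α e)) * (σ α z * e) := by
  apply ext'
  · simp [σ, ι, hz]
  · simp only [mul_a, σ, ι, MonoidHom.coe_mk, OneHom.coe_mk, one_left, phi_apply, π, mul_g]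
    apply Units.ext
    push_cast
    field_simp

lemma phi_mul (α : Z2 G) {z : G} (hz : ∀ g, g * z = z * g) (g h : G) :
    phi z α.1 (g * h) = phi z α.1 g * phi z α.1 h := by
  have h1 := comm_rel α hz (σ α g * σ α h)
  have h2 : σ α g * σ α h * σ α z
      = ι α (phi z α.1 g * phi z α.1 h) * (σ α z * (σ α g * σ α h)) := by
    calc σ α g * σ α h * σ α z = σ α g * (σ α h * σ α z) := mul_assoc _ _ _
      _ = σ α g * ι α (phi z α.1 h) * (σ α z * σ α h) := by
        rw [comm_rel α hz (σ α h), ← mul_assoc, π_σ]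
      _ = ι α (phi z α.1 h) * (σ α g * σ α z) * σ α h := by
        rw [← ι_comm]
        simp only [mul_assoc]
      _ = ι α (phi z α.1 g * phi z α.1 h) * (σ α z * (σ α g * σ α h)) := by
        rw [comm_rel α hz (σ α g), mul_comm (phi z α.1 g), map_mul, π_σ]
        simp only [mul_assoc]
  rw [h1, map_mul (π α), π_σ, π_σ] at h2
  exact ι_inj α (mul_right_cancel h2)

lemma phi_pow (α : Z2 G) {z : G} (hz : ∀ g, g * z = z * g) (N : ℕ) (hN : z ^ N = 1) (g : G) :
    phi z α.1 g ^ N = 1 := by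
  have key : ∀ k : ℕ, σ α g * σ α z ^ k = ι α (phi z α.1 g ^ k) * (σ α z ^ k * σ α g) := by
    intro k
    induction k with
    | zero => simp
    | succ k ih =>
      rw [pow_succ, ← mul_assoc, ih, mul_assoc, mul_assoc, comm_rel α hz, ← mul_assoc (σ α z ^ k),
        ← ι_comm, pow_succ, map_mul]
      simp only [mul_assoc, π_σ]
  have h1 : π α 1 = π α (σ α z ^ N) := by rw [map_pow, π_σ, hN, map_one]
  obtain ⟨a, ha⟩ := (π_eq_iff α _ _).1 h1
  have h2 := key N
  rw [ha, mul_one, ← ι_comm α a] at h2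
  have h3 : ι α (phi z α.1 g ^ N) = ι α 1 := by
    rw [map_one]
    exact (mul_eq_right.1 h2.symm)
  exact ι_inj α h3

/-- inflation -/
def infl {Q : Type} [Group Q] (f : G →* Q) : (Q → Q → ℂˣ) →* (G → G → ℂˣ) where
  toFun β := fun g h => β (f g) (f h)
  map_one' := rfl
  map_mul' _ _ := rfl

variable {Q : Type} [Group Q] {f : G →* Q}

lemma infl_Z2 (hf : Function.Surjective f) (β : Q → Q → ℂˣ) : infl f β ∈ Z2 G ↔ β ∈ Z2 Q := by
  constructor
  · intro h a b c
    obtain ⟨a, rfl⟩ := hf a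
    obtain ⟨b, rfl⟩ := hf b
    obtain ⟨c, rfl⟩ := hf c
    have := h a b c
    simpa [infl] using this
  · intro h a b c
    have := h (f a) (f b) (f c)
    simpa [infl] using this

lemma infl_dd (x : Q → ℂˣ) : infl f (dd Q x) = dd G (fun g => x (f g)) := by
  funext g h
  simp [infl, dd_apply]

lemma exists_j (hf : Function.Surjective f) {z : G} (hk : f.ker = Subgroup.zpowers z) :
    ∃ (s : Q → G) (j : G → ℤ), (∀ x, f (s x) = x) ∧ ∀ g, g = s (f g) * z ^ (j g) := by
  have : ∀ g, ∃ j : ℤ, g = Function.surjInv hf (f g) * z ^ j := by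
    intro g
    have : (Function.surjInv hf (f g))⁻¹ * g ∈ f.ker := by
      rw [MonoidHom.mem_ker, map_mul, map_inv, Function.surjInv_eq hf, inv_mul_cancel]
    rw [hk] at this
    obtain ⟨j, hj⟩ := this
    refine ⟨j, ?_⟩
    simp only at hj
    rw [hj, mul_inv_cancel_left]
  choose j hj using this
  exact ⟨Function.surjInv hf, j, Function.surjInv_eq hf, hj⟩

lemma descend (hf : Function.Surjective f) {z : G} (hk : f.ker = Subgroup.zpowers z)
    (α : G → G → ℂˣ) (hα : α ∈ Z2 G)
    (hinv : ∀ g h (i j : ℤ), α (g * z ^ i) (h * z ^ j) = α g h) :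
    ∃ β ∈ Z2 Q, infl f β = α := by
  obtain ⟨s, j, hs, hj⟩ := exists_j hf hk
  have h : infl f (fun x y => α (s x) (s y)) = α := by
    funext g h
    have := hinv (s (f g)) (s (f h)) (j g) (j h)
    rw [← hj, ← hj] at this
    exact this.symm
  refine ⟨_, ?_, h⟩
  rw [← infl_Z2 hf, h]
  exact hα

lemma ker_phi [Finite G] (hf : Function.Surjective f) {z : G} (hz : ∀ g, g * z = z * g)
    (hk : f.ker = Subgroup.zpowers z) (α : Z2 G) (hα : phi z α.1 = 1) :
    ∃ β ∈ Z2 Q, ∃ b ∈ B2 G, α.1 = infl f β * b := by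
  obtain ⟨s, j, hs, hj⟩ := exists_j hf hk
  have hN : 0 < orderOf z := orderOf_pos z
  have h1 : π α 1 = π α (σ α z ^ orderOf z) := by
    rw [map_pow, π_σ, pow_orderOf_eq_one, map_one]
  obtain ⟨a, ha⟩ := (π_eq_iff α _ _).1 h1
  obtain ⟨b0, hb0⟩ := IsAlgClosed.exists_pow_nat_eq ((a⁻¹ : ℂˣ) : ℂ) hN
  have hb0' : b0 ≠ 0 := by
    rintro rfl
    rw [zero_pow hN.ne'] at hb0
    exact (a⁻¹).ne_zero hb0.symm
  obtain ⟨b, rfl⟩ : ∃ b : ℂˣ, (b : ℂ) = b0 := ⟨Units.mk0 b0 hb0', rfl⟩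
  have hb : b ^ orderOf z = a⁻¹ := by
    apply Units.ext
    rw [← hb0]
    simp
  set ζ : Ext α := ι α b * σ α z with hζ
  have hζN : ζ ^ orderOf z = 1 := by
    have hc : Commute (ι α b) (σ α z) := ι_comm α b _
    rw [hζ, hc.mul_pow, ha, mul_one, ← map_pow, hb, ← map_mul, inv_mul_cancel, map_one]
  have hζc : ∀ e, Commute ζ e := by
    intro e
    have h2 := comm_rel α hz e
    rw [hα, Pi.one_apply, map_one, one_mul] at h2
    exact Commute.mul_left (ι_comm α b e) h2.symm
  have hζz : ∀ i i' : ℤ, z ^ i = z ^ i' → ζ ^ i = ζ ^ i' := by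
    intro i i' h
    rw [zpow_eq_zpow_iff_modEq] at h ⊢
    exact h.of_dvd (by exact_mod_cast orderOf_dvd_of_pow_eq_one hζN)
  have hπζ : π α ζ = z := by rw [hζ, map_mul, π_ι, one_mul, π_σ]
  let w : G → Ext α := fun g => σ α (s (f g)) * ζ ^ j g
  have hfz : f z = 1 := by
    rw [← MonoidHom.mem_ker, hk]
    exact Subgroup.mem_zpowers z
  have hw : ∀ g (i : ℤ), w (g * z ^ i) = w g * ζ ^ i := by
    intro g i
    have h3 : f (g * z ^ i) = f g := by simp [hfz]
    have h4 : z ^ j (g * z ^ i) = z ^ (j g + i) := by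
      have h5 := hj (g * z ^ i)
      rw [h3] at h5
      have h6 : s (f g) * (z ^ j g * z ^ i) = s (f g) * z ^ j (g * z ^ i) := by
        rw [← h5, ← mul_assoc, ← hj]
      rw [zpow_add]
      exact (mul_left_cancel h6).symm
    simp only [w]
    rw [h3, hζz _ _ h4, zpow_add, mul_assoc]
  have hπw : ∀ g, π α (σ α g) = π α (w g) := by
    intro g
    simp only [w]
    rw [map_mul, map_zpow, hπζ, π_σ, π_σ, ← hj]
  choose h hh using fun g => (π_eq_iff α _ _).1 (hπw g)
  let α' : G → G → ℂˣ := α.1 * dd G h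
  have hα' : α' ∈ Z2 G := (Z2 G).mul_mem α.2 (B2_le_Z2 G ⟨h, rfl⟩)
  have hrel : ∀ g g', w g * w g' = ι α (α' g g') * w (g * g') := by
    intro g g'
    rw [hh, hh, hh, mul_assoc, ← mul_assoc (σ α g), ← ι_comm, mul_assoc (ι α (h g')), σ_mul]
    simp only [← mul_assoc, ← map_mul]
    congr 2
    simp only [α', Pi.mul_apply, dd_apply]
    apply Units.ext
    push_cast
    field_simp
  obtain ⟨β, hβ, hβα⟩ := descend hf hk α' hα' (by
    intro g g' i i'
    apply ι_inj α
    have h5 := hrel (g * z ^ i) (g' * z ^ i')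
    have h6 : (g * z ^ i) * (g' * z ^ i') = (g * g') * z ^ (i + i') := by
      have : Commute g' (z ^ i) := Commute.zpow_right (hz g') i
      rw [zpow_add, mul_assoc, ← mul_assoc _ g', ← this.eq]
      simp only [mul_assoc]
    rw [h6, hw, hw, hw, mul_assoc, ← mul_assoc _ (w g'), ((hζc (w g')).zpow_left i).eq,
      mul_assoc (w g'), ← zpow_add, ← mul_assoc, hrel, mul_assoc] at h5
    exact (mul_right_cancel h5).symm)
  refine ⟨β, hβ, (dd G h)⁻¹, (B2 G).inv_mem ⟨h, rfl⟩, ?_⟩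
  rw [hβα]
  simp [α']

lemma ker_inf (hf : Function.Surjective f) {z : G} (hz : ∀ g, g * z = z * g)
    (hk : f.ker = Subgroup.zpowers z) (p : ℕ) (hp : p.Prime) (hzp : orderOf z = p)
    (hcom : z ∈ commutator G) :
    ∃ β ∈ Z2 Q, infl f β ∈ B2 G ∧ β ^ p = 1 ∧ β ∉ B2 Q := by
  obtain ⟨s, j, hs, hj⟩ := exists_j hf hk
  obtain ⟨ω, hω1, hωp⟩ : ∃ ω : ℂˣ, ω ≠ 1 ∧ ω ^ p = 1 := by
    have h := Complex.isPrimitiveRoot_exp p hp.ne_zero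
    obtain ⟨u, hu⟩ := h.isUnit hp.ne_zero
    refine ⟨u, ?_, ?_⟩
    · rintro rfl
      exact h.ne_one hp.one_lt hu.symm
    · apply Units.ext
      push_cast
      rw [hu, h.pow_eq_one]
  have hωz : ∀ i i' : ℤ, z ^ i = z ^ i' → ω ^ i = ω ^ i' := by
    intro i i' h
    rw [zpow_eq_zpow_iff_modEq] at h ⊢
    exact h.of_dvd (by rw [hzp]; exact_mod_cast orderOf_dvd_of_pow_eq_one hωp)
  let u : G → ℂˣ := fun g => ω ^ j g
  have hfz : f z = 1 := by
    rw [← MonoidHom.mem_ker, hk]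
    exact Subgroup.mem_zpowers z
  have hu : ∀ g (i : ℤ), u (g * z ^ i) = u g * ω ^ i := by
    intro g i
    have h3 : f (g * z ^ i) = f g := by simp [hfz]
    have h4 : z ^ j (g * z ^ i) = z ^ (j g + i) := by
      have h5 := hj (g * z ^ i)
      rw [h3] at h5
      have h6 : s (f g) * (z ^ j g * z ^ i) = s (f g) * z ^ j (g * z ^ i) := by
        rw [← h5, ← mul_assoc, ← hj]
      rw [zpow_add]
      exact (mul_left_cancel h6).symm
    simp only [u]
    rw [hωz _ _ h4, zpow_add]
  obtain ⟨β, hβ, hβu⟩ := descend hf hk (dd G u) (B2_le_Z2 G ⟨u, rfl⟩) (by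
    intro g g' i i'
    have h6 : (g * z ^ i) * (g' * z ^ i') = (g * g') * z ^ (i + i') := by
      have : Commute g' (z ^ i) := Commute.zpow_right (hz g') i
      rw [zpow_add, mul_assoc, ← mul_assoc _ g', ← this.eq]
      simp only [mul_assoc]
    simp only [dd_apply]
    rw [h6, hu, hu, hu, zpow_add]
    apply Units.ext
    push_cast
    field_simp)
  refine ⟨β, hβ, ⟨u, hβu.symm⟩, ?_, ?_⟩
  · funext x y
    obtain ⟨x, rfl⟩ := hf x
    obtain ⟨y, rfl⟩ := hf y
    have h7 : β (f x) (f y) = dd G u x y := congrFun (congrFun hβu x) y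
    have h8 : ∀ g, u g ^ p = 1 := by
      intro g
      simp only [u]
      rw [← zpow_natCast, ← zpow_mul, mul_comm, zpow_mul, zpow_natCast, hωp, one_zpow]
    simp only [Pi.pow_apply, Pi.one_apply]
    rw [h7, dd_apply, mul_pow, div_pow, h8, h8, h8]
    simp
  · rintro ⟨h, rfl⟩
    rw [infl_dd] at hβu
    let χ : G →* ℂˣ := MonoidHom.mk' (fun g => u g / h (f g)) (by
      intro g g'
      have h9 := congrFun (congrFun hβu g) g'
      simp only [dd_apply] at h9
      have h9' := congrArg Units.val h9
      apply Units.ext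
      push_cast at h9' ⊢
      field_simp at h9' ⊢
      linear_combination h9')
    have h10 : χ z = 1 := Abelianization.commutator_subset_ker χ hcom
    have h11 : χ 1 = 1 := map_one χ
    have h12 : u z / h (f z) = u 1 / h (f 1) := h10.trans h11.symm
    rw [hfz, map_one] at h12
    have h13 : u z = u 1 := div_left_injective h12
    have h14 := hu 1 1
    rw [one_mul, zpow_one, zpow_one, h13] at h14
    exact hω1 (mul_eq_left.1 h14.symm)

/-- the fundamental identity -/
lemma m_eq [Finite G] (hf : Function.Surjective f) {z : G} (hz : ∀ g, g * z = z * g)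
    (hk : f.ker = Subgroup.zpowers z) (hQ : m Q ≠ 0) :
    ((B2 Q).relIndex ((B2 G).comap (infl f) ⊓ Z2 Q)) * m G
      = Nat.card ((Z2 G).map (phi z)) * m Q ∧
    ((B2 Q).relIndex ((B2 G).comap (infl f) ⊓ Z2 Q)) ≠ 0 := by
  set W := (B2 G).comap (infl f) ⊓ Z2 Q with hW
  have hBW : B2 Q ≤ W := by
    refine le_inf ?_ (B2_le_Z2 Q)
    rintro _ ⟨x, rfl⟩
    exact ⟨_, (infl_dd x).symm⟩
  have hWZ : W ≤ Z2 Q := inf_le_right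
  have e1 := Subgroup.relIndex_mul_relIndex _ _ _ hBW hWZ
  have hfz : f z = 1 := by
    rw [← MonoidHom.mem_ker, hk]
    exact Subgroup.mem_zpowers z
  have hker : (phi z).ker ⊓ Z2 G = (Z2 Q).map (infl f) ⊔ B2 G := by
    apply le_antisymm
    · rintro α ⟨h1, h2⟩
      obtain ⟨β, hβ, b, hb, h⟩ := ker_phi hf hz hk ⟨α, h2⟩ h1
      simp only at h
      rw [h]
      exact Subgroup.mul_mem_sup ⟨β, hβ, rfl⟩ hb
    · apply sup_le
      · rintro _ ⟨β, hβ, rfl⟩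
        refine ⟨?_, (infl_Z2 hf β).2 hβ⟩
        refine MonoidHom.mem_ker.2 ?_
        funext g
        have h1 := one_left ⟨β, hβ⟩ (f g)
        have h2 := one_right ⟨β, hβ⟩ (f g)
        simp only at h1 h2
        simp [phi_apply, infl, hfz, h1, h2]
      · rintro _ ⟨x, rfl⟩
        refine ⟨?_, B2_le_Z2 G ⟨x, rfl⟩⟩
        refine MonoidHom.mem_ker.2 ?_
        funext g
        simp only [phi_apply, dd_apply, Pi.one_apply, hz]
        apply Units.ext
        push_cast
        field_simp
  have hBk : B2 G ≤ (phi z).ker ⊓ Z2 G := by rw [hker]; exact le_sup_right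
  have e2 := Subgroup.relIndex_mul_relIndex _ _ _ hBk inf_le_right
  rw [Subgroup.inf_relIndex_right, Subgroup.relIndex_ker, hker, Subgroup.relIndex_sup_right,
    ← Subgroup.relIndex_comap] at e2
  have e3 : W.relIndex (Z2 Q) = ((B2 G).comap (infl f)).relIndex (Z2 Q) :=
    Subgroup.inf_relIndex_right _ _
  rw [← e3] at e2
  constructor
  · change _ * (B2 G).relIndex (Z2 G) = _ * (B2 Q).relIndex (Z2 Q)
    rw [← e1, ← e2]
    ring
  · intro h0
    rw [h0, zero_mul] at e1
    exact hQ e1.symm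

end key
end SchurBound
namespace SchurBound
open Ext

lemma three_sub {G : Type} [Group G] (A B C N : Subgroup G) [N.Normal]
    (h1 : ⁅⁅B, C⁆, A⁆ ≤ N) (h2 : ⁅⁅C, A⁆, B⁆ ≤ N) : ⁅⁅A, B⁆, C⁆ ≤ N := by
  have key : ∀ H : Subgroup G, H ≤ N ↔ H.map (QuotientGroup.mk' N) = ⊥ := by
    intro H
    rw [Subgroup.map_eq_bot_iff, QuotientGroup.ker_mk']
  rw [key, Subgroup.map_commutator, Subgroup.map_commutator] at *
  exact Subgroup.commutator_commutator_eq_bot_of_rotate h1 h2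

lemma lcs_comm {G : Type} [Group G] (j : ℕ) : ∀ i : ℕ,
    ⁅(⊤ : Subgroup G).lowerCentralSeries i, (⊤ : Subgroup G).lowerCentralSeries j⁆
      ≤ (⊤ : Subgroup G).lowerCentralSeries (i + j + 1) := by
  induction j with
  | zero => intro i; exact le_rfl
  | succ j ih =>
    intro i
    rw [Subgroup.commutator_comm, Subgroup.lowerCentralSeries_succ]
    apply three_sub
    · rw [Subgroup.commutator_comm ⊤]
      have := ih (i + 1)
      rw [show i + 1 + j + 1 = i + (j + 1) + 1 by ring] at this
      exact this
    · exact Subgroup.commutator_mono (ih i) le_rfl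

lemma phi_trivial {G : Type} [Group G] (α : Z2 G) {z : G} (hz : ∀ g, g * z = z * g)
    (p : ℕ) (hp : p.Prime) (hzp : orderOf z = p) (c : ℕ)
    (hL : (⊤ : Subgroup G).lowerCentralSeries c ≤ Subgroup.zpowers z)
    (X : Subgroup G) (hX : X.lowerCentralSeries c ≠ ⊥)
    (hXz : ∀ x ∈ X, phi z α.1 x = 1) : phi z α.1 = 1 := by
  set N : Subgroup (Ext α) := X.comap (π α) with hN
  have hπ : Function.Surjective (π α) := fun g => ⟨σ α g, rfl⟩
  have hNX : N.map (π α) = X := Subgroup.map_comap_eq_self_of_surjective hπ X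
  have hbase : ⁅N, (⊤ : Subgroup (Ext α)).lowerCentralSeries c⁆ = ⊥ := by
    rw [Subgroup.commutator_eq_bot_iff_le_centralizer]
    intro n hn
    rw [Subgroup.mem_centralizer_iff]
    intro e he
    have h1 : π α e ∈ Subgroup.zpowers z := by
      apply hL
      have h2 := Subgroup.map_lowerCentralSeries ⊤ (π α) c
      rw [Subgroup.map_top_of_surjective _ hπ] at h2
      rw [← h2]
      exact ⟨e, he, rfl⟩
    obtain ⟨i, hi⟩ := h1
    simp only at hi
    have h3 : π α (σ α z ^ i) = π α e := by rw [map_zpow, π_σ, hi]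
    obtain ⟨a, rfl⟩ := (π_eq_iff α _ _).1 h3
    have h4 : Commute n (σ α z) := by
      have := comm_rel α hz n
      rw [hXz _ hn, map_one, one_mul] at this
      exact this
    have h5 : Commute (ι α a) n := ι_comm α a n
    exact Commute.mul_left h5 (h4.symm.zpow_left i)
  have claim : ∀ j i : ℕ, j + i = c →
      ⁅N.lowerCentralSeries j, (⊤ : Subgroup (Ext α)).lowerCentralSeries i⁆ = ⊥ := by
    intro j
    induction j with
    | zero =>
      intro i hi
      rw [zero_add] at hi
      rw [hi]
      exact hbase
    | succ j ih =>
      intro i hi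
      rw [Subgroup.lowerCentralSeries_succ]
      apply Subgroup.commutator_commutator_eq_bot_of_rotate
      · rw [eq_bot_iff, ← ih (i + 1) (by omega), Subgroup.commutator_comm (N.lowerCentralSeries j)]
        apply Subgroup.commutator_mono _ le_rfl
        rw [Subgroup.commutator_comm]
        exact Subgroup.commutator_mono le_rfl le_top
      · rw [eq_bot_iff, ← hbase, Subgroup.commutator_comm N]
        apply Subgroup.commutator_mono _ le_rfl
        have h6 := lcs_comm (G := Ext α) j i
        rw [show i + j + 1 = c by omega] at h6
        refine le_trans (Subgroup.commutator_mono le_rfl ?_) h6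
        exact Subgroup.lowerCentralSeries_mono j le_top
  have hcen := claim c 0 (by omega)
  rw [Subgroup.commutator_eq_bot_iff_le_centralizer] at hcen
  -- X_c contains z
  have hXK : X.lowerCentralSeries c ≤ Subgroup.zpowers z :=
    le_trans (Subgroup.lowerCentralSeries_mono c le_top) hL
  have hzX : z ∈ X.lowerCentralSeries c := by
    have hcz : Nat.card (Subgroup.zpowers z) = p := by rw [Nat.card_zpowers, hzp]
    have hfin : Finite (Subgroup.zpowers z) := Nat.finite_of_card_ne_zero (by
      rw [hcz]
      exact hp.ne_zero)
    have hdvd := Subgroup.card_dvd_of_le hXK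
    rw [hcz, Nat.dvd_prime hp] at hdvd
    rcases hdvd with h1 | h1
    · exact absurd (Subgroup.card_eq_one.1 h1) hX
    · rw [Subgroup.eq_of_le_of_card_ge hXK (by rw [hcz, h1])]
      exact Subgroup.mem_zpowers z
  rw [← hNX, ← Subgroup.map_lowerCentralSeries] at hzX
  obtain ⟨e, he, hez⟩ := hzX
  have hec := hcen he
  rw [Subgroup.mem_centralizer_iff] at hec
  obtain ⟨a, ha⟩ := (π_eq_iff α (σ α z) e).1 hez.symm
  funext g
  have h7 := comm_rel α hz (σ α g)
  have h8 : σ α g * e = e * σ α g := hec _ (Subgroup.mem_top (σ α g))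
  rw [ha, ← mul_assoc, ← ι_comm, mul_assoc, mul_assoc] at h8
  rw [mul_left_cancel h8, π_σ] at h7
  have h9 := mul_eq_right.1 h7.symm
  exact ι_inj α (h9.trans (map_one _).symm)

lemma exists_T {G : Type} [Group G] (c : ℕ) : ∀ (i : ℕ) (g : G),
    g ∉ Subgroup.upperCentralSeries G c → ∃ T : Finset G, T.card ≤ c ∧
      ∀ X : Subgroup G, (∀ t ∈ T, t ∈ X) → g ∈ X.lowerCentralSeries i →
        X.lowerCentralSeries (i + c) ≠ ⊥ := by
  classical
  induction c with
  | zero =>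
    intro i g hg
    refine ⟨∅, le_rfl, ?_⟩
    intro X _ hgX h
    rw [add_zero] at h
    rw [h] at hgX
    exact hg hgX
  | succ c ih =>
    intro i g hg
    rw [Subgroup.mem_upperCentralSeries_succ_iff] at hg
    push Not at hg
    obtain ⟨y, hy⟩ := hg
    obtain ⟨T, hT, hT2⟩ := ih (i + 1) _ hy
    refine ⟨insert y T, (Finset.card_insert_le _ _).trans (by omega), ?_⟩
    intro X hX hgX
    rw [show i + (c + 1) = i + 1 + c by ring]
    apply hT2 X (fun t ht => hX t (Finset.mem_insert_of_mem ht))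
    exact Subgroup.commutator_mem_commutator hgX (hX y (Finset.mem_insert_self _ _))

lemma exists_T' {G : Type} [Group G] (c : ℕ)
    (h : (⊤ : Subgroup G).lowerCentralSeries c ≠ ⊥) : ∃ T : Finset G, T.card ≤ c + 1 ∧
      ∀ X : Subgroup G, (∀ t ∈ T, t ∈ X) → X.lowerCentralSeries c ≠ ⊥ := by
  classical
  rw [Ne, Subgroup.lowerCentralSeries_eq_bot_iff_upperCentralSeries_eq_top, Subgroup.eq_top_iff'] at h
  push Not at h
  obtain ⟨g, hg⟩ := h
  obtain ⟨T, hT, hT2⟩ := exists_T c 0 g hg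
  refine ⟨insert g T, (Finset.card_insert_le _ _).trans (by omega), ?_⟩
  intro X hX
  have := hT2 X (fun t ht => hX t (Finset.mem_insert_of_mem ht)) (hX g (Finset.mem_insert_self _ _))
  rwa [zero_add] at this

lemma card_bound {G : Type} (F : Subgroup (G → ℂˣ)) (T : Finset G) (p : ℕ) (hp : p ≠ 0)
    (h1 : ∀ f ∈ F, ∀ g, f g ^ p = 1) (h2 : ∀ f ∈ F, (∀ t ∈ T, f t = 1) → f = 1) :
    Nat.card F ≠ 0 ∧ Nat.card F ≤ p ^ T.card := by
  have : NeZero p := ⟨hp⟩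
  let e : F → (T → rootsOfUnity p ℂ) := fun f t => ⟨f.1 t, (mem_rootsOfUnity _ _).2 (h1 f.1 f.2 t)⟩
  have he : Function.Injective e := by
    intro f f' h
    have h3 : f.1 / f'.1 = 1 := by
      apply h2 _ (F.div_mem f.2 f'.2)
      intro t ht
      have h4 := congrArg Subtype.val (congrFun h ⟨t, ht⟩)
      simp only [e] at h4
      rw [Pi.div_apply, h4, div_self']
    exact Subtype.ext (div_eq_one.1 h3)
  have := Finite.of_injective e he
  refine ⟨Nat.card_pos.ne', ?_⟩
  have := Nat.card_le_card_of_injective e he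
  rw [Nat.card_fun] at this
  refine this.trans ?_
  rw [Nat.card_eq_fintype_card (α := T), Fintype.card_coe]
  exact Nat.pow_le_pow_left (card_rootsOfUnity ℂ p) _

lemma card_phi_le {G : Type} [Group G] {z : G} (hz : ∀ g, g * z = z * g) (p : ℕ) (hp : p.Prime)
    (hzp : orderOf z = p) (T : Finset G)
    (h2 : ∀ α : Z2 G, (∀ x ∈ Subgroup.closure (T : Set G), phi z α.1 x = 1) → phi z α.1 = 1) :
    Nat.card ((Z2 G).map (phi z)) ≠ 0 ∧ Nat.card ((Z2 G).map (phi z)) ≤ p ^ T.card := by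
  apply card_bound _ _ _ hp.ne_zero
  · rintro _ ⟨α, hα, rfl⟩ g
    exact phi_pow ⟨α, hα⟩ hz p (hzp ▸ pow_orderOf_eq_one z) g
  · rintro _ ⟨α, hα, rfl⟩ h
    apply h2 ⟨α, hα⟩
    let χ : G →* ℂˣ := MonoidHom.mk' (phi z α) (phi_mul ⟨α, hα⟩ hz)
    have : Subgroup.closure (T : Set G) ≤ χ.ker := by
      rw [Subgroup.closure_le]
      intro t ht
      exact h t ht
    exact fun x hx => this hx

lemma p_le_relIndex {A : Type} [CommGroup A] (H W : Subgroup A) (p : ℕ) (hp : p.Prime)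
    (h0 : H.relIndex W ≠ 0) (b : A) (hb : b ∈ W) (hbp : b ^ p = 1) (hbH : b ∉ H) :
    p ≤ H.relIndex W := by
  have := Fact.mk hp
  have h1 : orderOf (QuotientGroup.mk (s := H.subgroupOf W) (⟨b, hb⟩ : W)) = p := by
    apply orderOf_eq_prime
    · rw [← QuotientGroup.mk_pow]
      have : (⟨b, hb⟩ : W) ^ p = 1 := Subtype.ext hbp
      rw [this, QuotientGroup.mk_one]
    · rw [Ne, QuotientGroup.eq_one_iff, Subgroup.mem_subgroupOf]
      exact hbH
  apply Nat.le_of_dvd (Nat.pos_of_ne_zero h0)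
  rw [← h1]
  exact orderOf_dvd_natCard _

end SchurBound
namespace SchurBound
open scoped commutatorElement
open Ext

lemma m_triv (G : Type) [Group G] [Subsingleton G] : m G = 1 := by
  rw [m, Subgroup.relIndex_eq_one]
  intro α hα
  refine ⟨fun _ => α 1 1, ?_⟩
  funext g h
  rw [Subsingleton.elim g 1, Subsingleton.elim h 1]
  simp [dd_apply]

lemma card_closure_le {G : Type} [Group G] [Finite G] (hc : ∀ a b : G, a * b = b * a) (N : ℕ)
    (T : Finset G) : (∀ t ∈ T, orderOf t ≤ N) →
    Nat.card (Subgroup.closure (T : Set G)) ≤ N ^ T.card := by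
  classical
  induction T using Finset.induction_on with
  | empty => intro _; simp
  | insert t T ht ih =>
    intro h
    have h1 := ih (fun s hs => h s (Finset.mem_insert_of_mem hs))
    have h2 := h t (Finset.mem_insert_self _ _)
    set K := Subgroup.closure (T : Set G) with hK
    have hKn : K.Normal := ⟨fun n hn g => by rw [hc g n, mul_assoc, mul_inv_cancel, mul_one]; exact hn⟩
    have h3 : Subgroup.closure ((insert t T : Finset G) : Set G) = Subgroup.zpowers t ⊔ K := by
      rw [Finset.coe_insert, Set.insert_eq, Subgroup.closure_union, Subgroup.zpowers_eq_closure]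
    rw [h3, Finset.card_insert_of_notMem ht, pow_succ]
    have h4 : Nat.card K * K.relIndex (Subgroup.zpowers t ⊔ K)
        = Nat.card (Subgroup.zpowers t ⊔ K : Subgroup G) := by
      rw [← Subgroup.relIndex_bot_left, ← Subgroup.relIndex_bot_left]
      exact Subgroup.relIndex_mul_relIndex _ _ _ bot_le le_sup_right
    rw [← h4, Subgroup.relIndex_sup_right]
    refine Nat.mul_le_mul h1 (le_trans (Nat.le_of_dvd Nat.card_pos (Subgroup.relIndex_dvd_card _ _)) ?_)
    rw [Nat.card_zpowers]
    exact h2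

lemma card_phi_ab {G Q : Type} [Group G] [CommGroup Q] [Finite Q] (f : G →* Q)
    (hf : Function.Surjective f) {z : G} (hz : ∀ g, g * z = z * g)
    (hk : f.ker = Subgroup.zpowers z) :
    Nat.card ((Z2 G).map (phi z)) ≠ 0 ∧ Nat.card ((Z2 G).map (phi z)) ≤ Nat.card Q := by
  have key : ∀ u : (Z2 G).map (phi z), ∃ χ : Q →* ℂˣ, ∀ g, u.1 g = χ (f g) := by
    rintro ⟨_, α, hα, rfl⟩
    let χ : G →* ℂˣ := MonoidHom.mk' (phi z α) (phi_mul ⟨α, hα⟩ hz)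
    have h1 : f.ker ≤ χ.ker := by
      rw [hk, Subgroup.zpowers_le]
      change phi z α z = 1
      rw [phi_apply, div_self']
    refine ⟨f.liftOfSurjective hf ⟨χ, h1⟩, fun g => ?_⟩
    exact (MonoidHom.liftOfRightInverse_comp_apply f _ _ ⟨χ, h1⟩ g).symm
  choose e he using key
  have hinj : Function.Injective e := by
    intro u v h
    apply Subtype.ext
    funext g
    rw [he, he, h]
  have hcard : Nat.card (Q →* ℂˣ) = Nat.card Q := CommGroup.card_monoidHom_of_hasEnoughRootsOfUnity Q ℂ
  have hfin : Finite (Q →* ℂˣ) := Nat.finite_of_card_ne_zero (by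
    rw [hcard]
    exact Nat.card_pos.ne')
  have := Finite.of_injective e hinj
  refine ⟨Nat.card_pos.ne', ?_⟩
  rw [← hcard]
  exact Nat.card_le_card_of_injective e hinj

lemma central_normal {G : Type} [Group G] {z : G} (hz : ∀ g, g * z = z * g) :
    (Subgroup.zpowers z).Normal := by
  refine ⟨?_⟩
  rintro _ ⟨i, rfl⟩ g
  have : Commute g (z ^ i) := Commute.zpow_right (hz g) i
  simp only
  rw [this.eq, mul_assoc, mul_inv_cancel, mul_one]
  exact ⟨i, rfl⟩

lemma card_quot {G : Type} [Group G] [Finite G] (z : G) (H : Subgroup G) (hH : z ∈ H)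
    [(Subgroup.zpowers z).Normal] :
    Nat.card H = orderOf z * Nat.card (H.map (QuotientGroup.mk' (Subgroup.zpowers z))) := by
  have h1 := Subgroup.relIndex_ker (K := H) (QuotientGroup.mk' (Subgroup.zpowers z))
  rw [QuotientGroup.ker_mk'] at h1
  rw [← h1, ← Nat.card_zpowers, ← Subgroup.relIndex_bot_left, ← Subgroup.relIndex_bot_left]
  exact (Subgroup.relIndex_mul_relIndex _ _ _ bot_le (by rwa [Subgroup.zpowers_le])).symm

lemma abelian_bound (d : ℕ) : ∀ (G : Type) [Group G] [Finite G], (∀ a b : G, a * b = b * a) →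
    ∀ T : Finset G, Subgroup.closure (T : Set G) = ⊤ → T.card ≤ d →
    m G ≠ 0 ∧ m G ^ 2 * Nat.card G ≤ Nat.card G ^ d := by
  classical
  induction d with
  | zero =>
    intro G _ _ hc T hT hTd
    have h0 : T = ∅ := Finset.card_eq_zero.1 (by omega)
    rw [h0, Finset.coe_empty, Subgroup.closure_empty] at hT
    have : Subsingleton G := Subgroup.subsingleton_iff.1 (subsingleton_of_bot_eq_top hT)
    rw [m_triv, Nat.card_unique]
    simp
  | succ d ih =>
    intro G _ _ hc T hT hTd
    rcases T.eq_empty_or_nonempty with h0 | hne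
    · rw [h0, Finset.coe_empty, Subgroup.closure_empty] at hT
      have : Subsingleton G := Subgroup.subsingleton_iff.1 (subsingleton_of_bot_eq_top hT)
      rw [m_triv, Nat.card_unique]
      simp
    · obtain ⟨z, hzT, hmax⟩ := Finset.exists_max_image T orderOf hne
      have hz : ∀ g, g * z = z * g := fun g => hc g z
      have hGc : Nat.card G ≤ orderOf z ^ (d + 1) := by
        have h1 := card_closure_le hc (orderOf z) T hmax
        rw [hT, Subgroup.card_top] at h1
        exact h1.trans (Nat.pow_le_pow_right (orderOf_pos z) hTd)
      have hn := central_normal hz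
      let q := QuotientGroup.mk' (Subgroup.zpowers z)
      have hq : Function.Surjective q := QuotientGroup.mk'_surjective _
      have hcQ : ∀ a b : G ⧸ Subgroup.zpowers z, a * b = b * a := by
        intro a b
        obtain ⟨a, rfl⟩ := hq a
        obtain ⟨b, rfl⟩ := hq b
        rw [← map_mul, ← map_mul, hc]
      have hcard : Nat.card G = orderOf z * Nat.card (G ⧸ Subgroup.zpowers z) := by
        have := card_quot z ⊤ (Subgroup.mem_top z)
        rwa [Subgroup.map_top_of_surjective _ hq, Subgroup.card_top, Subgroup.card_top] at this
      have hk : q.ker = Subgroup.zpowers z := QuotientGroup.ker_mk' _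
      have hTQ : Subgroup.closure (((T.erase z).image q : Finset _) : Set (G ⧸ Subgroup.zpowers z)) = ⊤ := by
        have h1 : Subgroup.closure (q '' (T : Set G)) = ⊤ := by
          rw [← MonoidHom.map_closure, hT, Subgroup.map_top_of_surjective _ hq]
        rw [eq_top_iff, ← h1, Subgroup.closure_le]
        rintro _ ⟨t, ht, rfl⟩
        by_cases htz : t = z
        · have : q t = 1 := by
            rw [← MonoidHom.mem_ker, hk, htz]
            exact Subgroup.mem_zpowers z
          rw [this]
          exact Subgroup.one_mem _
        · apply Subgroup.subset_closure
          rw [Finset.coe_image]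
          exact ⟨t, Finset.mem_coe.2 (Finset.mem_erase.2 ⟨htz, ht⟩), rfl⟩
      obtain ⟨hm0, hmQ⟩ := ih (G ⧸ Subgroup.zpowers z) hcQ ((T.erase z).image q) hTQ (by
        refine Finset.card_image_le.trans ?_
        rw [Finset.card_erase_of_mem hzT]
        omega)
      obtain ⟨e1, e2⟩ := m_eq hq hz hk hm0
      obtain ⟨e3, e4⟩ : Nat.card ((Z2 G).map (phi z)) ≠ 0 ∧
          Nat.card ((Z2 G).map (phi z)) ≤ Nat.card (G ⧸ Subgroup.zpowers z) := by
        let _ : CommGroup (G ⧸ Subgroup.zpowers z) :=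
          { (inferInstance : Group (G ⧸ Subgroup.zpowers z)) with mul_comm := hcQ }
        exact card_phi_ab q hq hz hk
      have hle : m G ≤ Nat.card (G ⧸ Subgroup.zpowers z) * m (G ⧸ Subgroup.zpowers z) := by
        calc m G ≤ _ * m G := Nat.le_mul_of_pos_left _ (Nat.pos_of_ne_zero e2)
          _ = _ := e1
          _ ≤ _ := Nat.mul_le_mul_right _ e4
      refine ⟨fun h0 => ?_, ?_⟩
      · rw [h0, mul_zero] at e1
        exact (Nat.mul_ne_zero e3 hm0) e1.symm
      · generalize m G = mG at *
        generalize m (G ⧸ Subgroup.zpowers z) = mQ at *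
        generalize Nat.card (G ⧸ Subgroup.zpowers z) = cQ at *
        generalize Nat.card G = cG at *
        calc mG ^ 2 * cG ≤ (cQ * mQ) ^ 2 * orderOf z ^ (d + 1) :=
              Nat.mul_le_mul (Nat.pow_le_pow_left hle 2) hGc
          _ = (mQ ^ 2 * cQ) * (cQ * orderOf z ^ (d + 1)) := by ring
          _ ≤ cQ ^ d * (cQ * orderOf z ^ (d + 1)) := Nat.mul_le_mul_right _ hmQ
          _ = cG ^ (d + 1) := by rw [hcard]; ring

/-- The main induction. -/
lemma main_bound (p : ℕ) (hp : p.Prime) (d : ℕ) (N : ℕ) : ∀ (G : Type) [Group G] [Finite G],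
    Nat.card G = N → IsPGroup p G →
    ∀ T : Finset G, Subgroup.closure (T : Set G) = ⊤ → T.card ≤ d + 1 →
    ∀ c : ℕ, (⊤ : Subgroup G).lowerCentralSeries (c + 1) = ⊥ →
    (c = 0 ∨ (⊤ : Subgroup G).lowerCentralSeries c ≠ ⊥) →
    m G ≠ 0 ∧ m G ^ 2 * (p ^ (∑ i ∈ Finset.range c, (d - (i + 1)))) ^ 2
      ≤ (Nat.card G * Nat.card (commutator G)) ^ d := by
  classical
  have hpf : Fact p.Prime := ⟨hp⟩
  induction N using Nat.strong_induction_on with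
  | _ N ih =>
  intro G _ _ hN hG T hT hTd c hc hc'
  rcases c with _ | c
  · have hcom : commutator G = ⊥ := hc
    have hab : ∀ a b : G, a * b = b * a := by
      intro a b
      have : ⁅a, b⁆ ∈ commutator G := Subgroup.commutator_mem_commutator (Subgroup.mem_top _) (Subgroup.mem_top _)
      rw [hcom, Subgroup.mem_bot, commutatorElement_eq_one_iff_mul_comm] at this
      exact this
    obtain ⟨h1, h2⟩ := abelian_bound (d + 1) G hab T hT hTd
    refine ⟨h1, ?_⟩
    rw [hcom]
    simp only [Finset.range_zero, Finset.sum_empty, pow_zero, one_pow, mul_one, Subgroup.card_bot]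
    rw [pow_succ] at h2
    exact Nat.le_of_mul_le_mul_right h2 Nat.card_pos
  · have hne : (⊤ : Subgroup G).lowerCentralSeries (c + 1) ≠ ⊥ := by
      rcases hc' with h | h
      · omega
      · exact h
    set L := (⊤ : Subgroup G).lowerCentralSeries (c + 1) with hL
    obtain ⟨z, hzL, hzp⟩ : ∃ z ∈ L, orderOf z = p := by
      have h1 : p ∣ Nat.card L := by
        refine (hG.to_subgroup L).card_eq_or_dvd.resolve_left ?_
        rw [Subgroup.card_eq_one]
        exact hne
      obtain ⟨⟨z, hz⟩, h2⟩ := exists_prime_orderOf_dvd_card' p h1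
      exact ⟨z, hz, by rwa [Subgroup.orderOf_mk] at h2⟩
    have hcen : ∀ x ∈ L, ∀ g, g * x = x * g := by
      intro x hx g
      have h1 : ⁅x, g⁆ ∈ (⊤ : Subgroup G).lowerCentralSeries (c + 1 + 1) :=
        Subgroup.commutator_mem_commutator hx (Subgroup.mem_top g)
      rw [hc, Subgroup.mem_bot, commutatorElement_eq_one_iff_mul_comm] at h1
      exact h1.symm
    have hz := hcen z hzL
    have hzcom : z ∈ commutator G :=
      (⊤ : Subgroup G).lowerCentralSeries_antitone (show 1 ≤ c + 1 by omega) hzL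
    have hn := central_normal hz
    let q := QuotientGroup.mk' (Subgroup.zpowers z)
    have hq : Function.Surjective q := QuotientGroup.mk'_surjective _
    have hk : q.ker = Subgroup.zpowers z := QuotientGroup.ker_mk' _
    have hmap : ∀ i, (⊤ : Subgroup (G ⧸ Subgroup.zpowers z)).lowerCentralSeries i
        = ((⊤ : Subgroup G).lowerCentralSeries i).map q := by
      intro i
      rw [Subgroup.map_lowerCentralSeries, Subgroup.map_top_of_surjective _ hq]
    have hbot : ∀ i, (⊤ : Subgroup (G ⧸ Subgroup.zpowers z)).lowerCentralSeries i = ⊥ ↔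
        (⊤ : Subgroup G).lowerCentralSeries i ≤ Subgroup.zpowers z := by
      intro i
      rw [hmap, Subgroup.map_eq_bot_iff, hk]
    have hcard : Nat.card G = p * Nat.card (G ⧸ Subgroup.zpowers z) := by
      have := card_quot z ⊤ (Subgroup.mem_top z)
      rwa [Subgroup.map_top_of_surjective _ hq, Subgroup.card_top, Subgroup.card_top, hzp] at this
    have hcard' : Nat.card (commutator G) = p * Nat.card (commutator (G ⧸ Subgroup.zpowers z)) := by
      have h1 := card_quot z (commutator G) hzcom
      have h2 := hmap 1
      rw [Subgroup.top_lowerCentralSeries_one, Subgroup.top_lowerCentralSeries_one] at h2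
      rwa [hzp, ← h2] at h1
    have hlt : Nat.card (G ⧸ Subgroup.zpowers z) < N := by
      rw [← hN, hcard]
      exact lt_mul_of_one_lt_left Nat.card_pos hp.one_lt
    have hTQ : Subgroup.closure ((T.image q : Finset _) : Set (G ⧸ Subgroup.zpowers z)) = ⊤ := by
      rw [Finset.coe_image, ← MonoidHom.map_closure, hT, Subgroup.map_top_of_surjective _ hq]
    have IH := ih _ hlt (G ⧸ Subgroup.zpowers z) rfl (hG.to_quotient _) (T.image q) hTQ
      (Finset.card_image_le.trans hTd)
    have hphi1 := card_phi_le hz p hp hzp T (fun α h => by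
      rw [hT] at h
      funext x
      exact h x (Subgroup.mem_top x))
    -- common final step
    have final : ∀ S : ℕ, (m (G ⧸ Subgroup.zpowers z) ≠ 0 ∧ m (G ⧸ Subgroup.zpowers z) ^ 2 * (p ^ S) ^ 2
          ≤ (Nat.card (G ⧸ Subgroup.zpowers z) * Nat.card (commutator (G ⧸ Subgroup.zpowers z))) ^ d) →
        ∀ t : ℕ, Nat.card ((Z2 G).map (phi z)) * p ^ t ≤ p ^ (d + 1) →
        m G ≠ 0 ∧ m G ^ 2 * (p ^ (S + t)) ^ 2
      ≤ (Nat.card G * Nat.card (commutator G)) ^ d := by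
      rintro S ⟨hm0, hS⟩ t ht
      obtain ⟨e1, e2⟩ := m_eq hq hz hk hm0
      obtain ⟨β, hβ, hβ1, hβ2, hβ3⟩ := ker_inf hq hz hk p hp hzp hzcom
      have e3 := p_le_relIndex (B2 (G ⧸ Subgroup.zpowers z)) _ p hp e2 β ⟨hβ1, hβ⟩ hβ2 hβ3
      refine ⟨fun h0 => ?_, ?_⟩
      · rw [h0, mul_zero] at e1
        exact (Nat.mul_ne_zero hphi1.1 hm0) e1.symm
      · have e4 : p * m G ≤ Nat.card ((Z2 G).map (phi z)) * m (G ⧸ Subgroup.zpowers z) := by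
          rw [← e1]
          exact Nat.mul_le_mul_right _ e3
        rw [hcard, hcard']
        generalize m G = mG at *
        generalize m (G ⧸ Subgroup.zpowers z) = mQ at *
        generalize Nat.card ((Z2 G).map (phi z)) = F at *
        generalize Nat.card (G ⧸ Subgroup.zpowers z) = cQ at *
        generalize Nat.card (commutator (G ⧸ Subgroup.zpowers z)) = cQ' at *
        have hp2 : 0 < p ^ 2 := pow_pos hp.pos 2
        apply Nat.le_of_mul_le_mul_left _ hp2
        calc p ^ 2 * (mG ^ 2 * (p ^ (S + t)) ^ 2) = (p * mG) ^ 2 * (p ^ (S + t)) ^ 2 := by ring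
          _ ≤ (F * mQ) ^ 2 * (p ^ (S + t)) ^ 2 := Nat.mul_le_mul_right _ (Nat.pow_le_pow_left e4 2)
          _ = (F * p ^ t) ^ 2 * (mQ ^ 2 * (p ^ S) ^ 2) := by ring
          _ ≤ (p ^ (d + 1)) ^ 2 * (cQ * cQ') ^ d := Nat.mul_le_mul (Nat.pow_le_pow_left ht 2) hS
          _ = p ^ 2 * (p * cQ * (p * cQ')) ^ d := by
            rw [show p * cQ * (p * cQ') = p ^ 2 * (cQ * cQ') by ring, mul_pow]
            ring
    have hF1 : Nat.card ((Z2 G).map (phi z)) ≤ p ^ (d + 1) :=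
      hphi1.2.trans (Nat.pow_le_pow_right hp.pos hTd)
    by_cases hLz : L ≤ Subgroup.zpowers z
    · have IH1 := IH c ((hbot _).2 hLz) (by
        by_cases hc0 : c = 0
        · exact Or.inl hc0
        · right
          rw [Ne, hbot]
          intro h
          apply hne
          rw [eq_bot_iff, hL, Subgroup.lowerCentralSeries_succ, Subgroup.commutator_le]
          intro x hx g _
          have hxL : x ∈ L := (Subgroup.zpowers_le.2 hzL) (h hx)
          rw [Subgroup.mem_bot, commutatorElement_eq_one_iff_mul_comm]
          exact (hcen x hxL g).symm)
      obtain ⟨T', hT', hT'2⟩ := exists_T' (c + 1) hne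
      have hphi2 := card_phi_le hz p hp hzp T' (fun α h =>
        phi_trivial α hz p hp hzp (c + 1) hLz (Subgroup.closure (T' : Set G))
          (hT'2 _ (fun t ht => Subgroup.subset_closure ht)) h)
      rw [Finset.sum_range_succ]
      apply final _ IH1
      by_cases hdc : c + 1 ≤ d
      · calc _ ≤ p ^ (c + 1 + 1) * p ^ (d - (c + 1)) :=
              Nat.mul_le_mul_right _ (hphi2.2.trans (Nat.pow_le_pow_right hp.pos hT'))
          _ = p ^ (d + 1) := by
              rw [← pow_add]
              congr 1
              omega
      · rw [show d - (c + 1) = 0 by omega, pow_zero, mul_one]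
        exact hF1
    · have IH2 := IH (c + 1) ((hbot _).2 (by rw [hc]; exact bot_le)) (Or.inr (by rwa [Ne, hbot]))
      have := final _ IH2 0 (by rwa [pow_zero, mul_one])
      rwa [add_zero] at this

end SchurBound

/-- Theorem 1, the case `d ≤ c`:
`|M(G)| ≤ p ^ ((d - 1) * (n + k) / 2 - (d - 1) * (d - 2) / 2)`. -/
theorem schur_multiplier_bound_of_d_le_class (p n k c d : ℕ) (hp : p.Prime)
    (G : Type) [Group G] [Finite G] [Group.IsNilpotent G]
    (hcard : Nat.card G = p ^ n)
    (hna : ∃ a b : G, a * b ≠ b * a)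
    (hc : Group.nilpotencyClass G = c)
    (hk : Nat.card (commutator G) = p ^ k)
    (hd : Group.rank G = d)
    (hdc : d ≤ c) :
    (Nat.card (schurMultiplier G) : ℝ) ≤
      (p : ℝ) ^ (((d : ℝ) - 1) * ((n : ℝ) + (k : ℝ)) / 2
        - ((d : ℝ) - 1) * ((d : ℝ) - 2) / 2) := by
  obtain ⟨T, hT, hTc⟩ := Group.rank_spec G
  rw [hd] at hT
  obtain ⟨a, b, hab⟩ := hna
  have hd0 : d ≠ 0 := by
    rintro rfl
    rw [Finset.card_eq_zero] at hT
    rw [hT, Finset.coe_empty, Subgroup.closure_empty] at hTc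
    have : Subsingleton G := Subgroup.subsingleton_iff.1 (subsingleton_of_bot_eq_top hTc)
    exact hab (Subsingleton.elim _ _)
  obtain ⟨d, rfl⟩ := Nat.exists_eq_succ_of_ne_zero hd0
  obtain ⟨c, rfl⟩ : ∃ c', c = c' + 1 := ⟨c - 1, by omega⟩
  have hG : IsPGroup p G := IsPGroup.of_card hcard
  have h1 := SchurBound.main_bound p hp d _ G rfl hG T hTc (by omega) c
    (Subgroup.lowerCentralSeries_eq_bot_iff_nilpotencyClass_le.2 hc.le)
    (Or.inr (by
      rw [Ne, Subgroup.lowerCentralSeries_eq_bot_iff_nilpotencyClass_le]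
      omega))
  have h2 := h1.2
  rw [hcard, hk, ← SchurBound.card_schur] at h2
  have hsum : ∀ d c : ℕ, d ≤ c → 2 * (∑ i ∈ Finset.range c, (d - (i + 1))) = d * (d - 1) := by
    intro d
    induction d with
    | zero => intro c _; simp
    | succ d ih =>
      intro c hc
      obtain ⟨c, rfl⟩ : ∃ c', c = c' + 1 := ⟨c - 1, by omega⟩
      rw [Finset.sum_range_succ']
      have h3 : ∀ i ∈ Finset.range c, d + 1 - (i + 1 + 1) = d - (i + 1) := by
        intro i _
        omega
      rw [Finset.sum_congr rfl h3, mul_add, ih c (by omega)]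
      rcases d with _ | d
      · simp
      · simp
        ring
  have hs := hsum d c (by omega)
  generalize (∑ i ∈ Finset.range c, (d - (i + 1))) = S at hs h2
  have hsR : 2 * (S : ℝ) = d * ((d : ℝ) - 1) := by
    rcases d with _ | d
    · simp at hs
      simp [hs]
    · have : ((2 * S : ℕ) : ℝ) = (((d + 1) * (d + 1 - 1) : ℕ) : ℝ) := by rw [hs]
      push_cast at this
      push_cast
      linarith
  have hpR : (0 : ℝ) < p := by exact_mod_cast hp.pos
  have h4 : ((Nat.card (schurMultiplier G) : ℝ) * (p : ℝ) ^ S) ^ 2 ≤ (p : ℝ) ^ ((n + k) * d) := by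
    have : ((Nat.card (schurMultiplier G) ^ 2 * (p ^ S) ^ 2 : ℕ) : ℝ) ≤ (((p ^ n * p ^ k) ^ d : ℕ) : ℝ) := by
      exact_mod_cast h2
    push_cast at this
    rw [mul_pow, pow_mul, pow_add]
    exact this
  set x : ℝ := ((d + 1 : ℕ) - 1 : ℝ) * ((n : ℝ) + (k : ℝ)) / 2
        - ((d + 1 : ℕ) - 1 : ℝ) * ((d + 1 : ℕ) - 2 : ℝ) / 2 with hx
  have h5 : ((p : ℝ) ^ x * (p : ℝ) ^ S) ^ 2 = (p : ℝ) ^ ((n + k) * d) := by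
    rw [← Real.rpow_natCast, ← Real.rpow_natCast, ← Real.rpow_natCast, ← Real.rpow_add hpR,
      ← Real.rpow_mul hpR.le]
    congr 1
    rw [hx]
    push_cast
    linear_combination hsR
  rw [← h5] at h4
  have h6 := (pow_le_pow_iff_left₀ (by positivity) (by positivity) two_ne_zero).1 h4
  exact le_of_mul_le_mul_right h6 (by positivity)
end

section
/- Let p be a prime and G a finite p-group of nilpotency class 2 such that G^p ≤ γ₂(G), with |γ₂(G)| = p^k and d(G) = d. Then p^{(1/2)d(d-1) − k} ≤ |M(G)|. -/
open groupCohomology in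
lemma sm_memZ {G : Type} [Group G] (f : G × G → Additive ℂˣ) :
    f ∈ cocycles₂ (Rep.trivial ℤ G (Additive ℂˣ)) ↔
      ∀ g h j : G, f (g * h, j) + f (g, h) = f (h, j) + f (g, h * j) :=
  mem_cocycles₂_iff (A := Rep.trivial ℤ G (Additive ℂˣ)) f

open groupCohomology in
lemma sm_memB {G : Type} [Group G] (f : G × G → Additive ℂˣ) :
    f ∈ coboundaries₂ (Rep.trivial ℤ G (Additive ℂˣ)) ↔
      ∃ c : G → Additive ℂˣ, ∀ g h : G, f (g, h) = c h - c (g * h) + c g := by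
  constructor
  · rintro ⟨c, rfl⟩
    exact ⟨c, fun _ _ => rfl⟩
  · rintro ⟨c, hc⟩
    exact ⟨c, funext fun x => (hc x.1 x.2).symm⟩

lemma sm_root (n : ℕ) (hn : n ≠ 0) (a : Additive ℂˣ) : ∃ b : Additive ℂˣ, n • b = a := by
  obtain ⟨z, hz⟩ := IsAlgClosed.exists_pow_nat_eq ((Additive.toMul a : ℂˣ) : ℂ)
    (Nat.pos_of_ne_zero hn)
  have hz0 : z ≠ 0 := by
    rintro rfl
    rw [zero_pow hn] at hz
    exact (Additive.toMul a).ne_zero hz.symm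
  refine ⟨Additive.ofMul (Units.mk0 z hz0), ?_⟩
  apply Additive.toMul.injective
  ext
  simpa using hz

lemma sm_tors (n : ℕ) (hn : n ≠ 0) : Finite {a : Additive ℂˣ // n • a = 0} := by
  have : NeZero n := ⟨hn⟩
  refine Finite.of_injective (β := rootsOfUnity n ℂ)
    (fun a => ⟨Additive.toMul a.1, by
      rw [mem_rootsOfUnity]; exact congrArg Additive.toMul a.2⟩) ?_
  intro a b h
  apply Subtype.ext
  exact Additive.toMul.injective (congrArg Subtype.val h)

open groupCohomology in
lemma sm_finite (G : Type) [Group G] [Finite G] :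
    Finite (groupCohomology (Rep.trivial ℤ G (Additive ℂˣ)) 2) := by
  classical
  have := Fintype.ofFinite G
  set n := Fintype.card G with hn
  have hn0 : n ≠ 0 := Fintype.card_ne_zero
  have := sm_tors n hn0
  let F := {z : cocycles₂ (Rep.trivial ℤ G (Additive ℂˣ)) //
    ∀ g : G × G, n • ((z.1 : G × G → Additive ℂˣ) g) = 0}
  have : Finite F := by
    refine Finite.of_injective (β := G × G → {a : Additive ℂˣ // n • a = 0})
      (fun z g => ⟨(z.1.1 : G × G → Additive ℂˣ) g, z.2 g⟩) ?_
    intro a b h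
    apply Subtype.ext
    apply Subtype.ext
    funext g
    exact congrArg Subtype.val (congrFun h g)
  refine Finite.of_surjective (fun z : F => H2π (Rep.trivial ℤ G (Additive ℂˣ)) z.1) ?_
  intro x
  induction x using H2_induction_on with
  | h f =>
    obtain ⟨f, hf⟩ := f
    have hf' := (sm_memZ f).1 hf
    let c : G → Additive ℂˣ := fun x => ∑ y, (f : G × G → Additive ℂˣ) (x, y)
    choose e he using fun x => sm_root n hn0 (c x)
    have key : ∀ g h : G, n • (f : G × G → Additive ℂˣ) (g, h) = c h - c (g * h) + c g := by
      intro g h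
      have := Finset.sum_congr (rfl : (Finset.univ : Finset G) = _) fun j _ => hf' g h j
      rw [Finset.sum_add_distrib, Finset.sum_add_distrib, Finset.sum_const, Finset.card_univ,
        Fintype.sum_equiv (Equiv.mulLeft h) (fun j => (f : G × G → Additive ℂˣ) (g, h * j))
          (fun j => (f : G × G → Additive ℂˣ) (g, j)) (fun _ => rfl)] at this
      change c (g * h) + n • _ = c h + c g at this
      rw [sub_add_eq_add_sub, ← this]
      abel
    let δ : G × G → Additive ℂˣ := fun x => e x.2 - e (x.1 * x.2) + e x.1
    have hδ : δ ∈ coboundaries₂ (Rep.trivial ℤ G (Additive ℂˣ)) :=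
      (sm_memB δ).2 ⟨e, fun _ _ => rfl⟩
    have hδ' := coboundaries₂_le_cocycles₂ _ hδ
    refine ⟨⟨⟨f, hf⟩ - ⟨δ, hδ'⟩, ?_⟩, ?_⟩
    · rintro ⟨g, h⟩
      change n • ((f : G × G → Additive ℂˣ) (g, h) - (e h - e (g * h) + e g)) = 0
      have h1 : ∀ a b c d : Additive ℂˣ, n • (a - (b - c + d)) =
          n • a - (n • b - n • c + n • d) := fun a b c d => by
        rw [nsmul_sub, nsmul_add, nsmul_sub]
      refine (h1 _ _ _ _).trans ?_
      rw [he, he, he, sub_eq_zero]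
      exact key g h
    · change H2π _ (_ - _) = _
      refine (map_sub (H2π (Rep.trivial ℤ G (Additive ℂˣ))).hom _ _).trans ?_
      refine sub_eq_self.2 ?_
      exact (H2π_eq_zero_iff (A := Rep.trivial ℤ G (Additive ℂˣ)) ⟨δ, hδ'⟩).2 hδ

lemma sm_card_hom (H : Type) [Group H] [Finite H] :
    Finite (H →* ℂˣ) ∧ Nat.card (H →* ℂˣ) ≤ Nat.card H := by
  have := Fintype.ofFinite H
  have li := linearIndependent_monoidHom H ℂ
  have : Finite (H →* ℂ) := li.finite
  have := Fintype.ofFinite (H →* ℂ)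
  have h1 : Nat.card (H →* ℂ) ≤ Nat.card H := by
    have := li.fintype_card_le_finrank
    rwa [Module.finrank_pi, ← Nat.card_eq_fintype_card, ← Nat.card_eq_fintype_card] at this
  have inj : Function.Injective (fun f : H →* ℂˣ => (Units.coeHom ℂ).comp f) := by
    intro f g h
    ext x
    exact DFunLike.congr_fun h x
  exact ⟨Finite.of_injective _ inj, (Nat.card_le_card_of_injective _ inj).trans h1⟩

lemma sm_char (p : ℕ) [Fact p.Prime] : ∃ e : ZMod p →+ Additive ℂˣ, Function.Injective e := by
  refine ⟨AddMonoidHom.mk' (fun a => Additive.ofMul (Circle.toUnits (ZMod.toCircle a))) ?_, ?_⟩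
  · intro a b
    rw [AddChar.map_add_eq_mul, map_mul]; rfl
  · intro a b h
    have h1 : Circle.toUnits (ZMod.toCircle a) = Circle.toUnits (ZMod.toCircle b) := h
    apply ZMod.injective_toCircle
    ext
    exact congrArg Units.val h1

lemma sm_pairs (n : ℕ) :
    Fintype.card {s : Fin n × Fin n // s.1 < s.2} = n * (n - 1) / 2 := by
  have : Fintype.card {s : Fin n × Fin n // s.1 < s.2} = Fintype.card ((j : Fin n) × Fin j) := by
    refine Fintype.card_congr ⟨fun s => ⟨s.1.2, ⟨s.1.1, s.2⟩⟩,
      fun t => ⟨(⟨t.2, t.2.2.trans t.1.2⟩, t.1), t.2.2⟩, fun _ => rfl, fun _ => rfl⟩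
  rw [this, Fintype.card_sigma]
  simp only [Fintype.card_fin]
  rw [Fin.sum_univ_eq_sum_range (fun i => i) n, Finset.sum_range_id]

open commutatorElement in
/-- Generators modulo the derived subgroup generate, in class two. -/
lemma sm_gen {G : Type} [Group G] (hz : commutator G ≤ Subgroup.center G) (H : Subgroup G)
    (h : ∀ g : G, ∃ x ∈ H, x⁻¹ * g ∈ commutator G) : H = ⊤ := by
  have hc : commutator G ≤ H := by
    rw [commutator_def, Subgroup.commutator_le]
    intro a _ b _
    obtain ⟨x, hx, hxa⟩ := h a
    obtain ⟨y, hy, hyb⟩ := h b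
    obtain ⟨u, hu⟩ : ∃ u, u = x⁻¹ * a := ⟨_, rfl⟩
    obtain ⟨v, hv⟩ : ∃ v, v = y⁻¹ * b := ⟨_, rfl⟩
    have hua : a = x * u := by rw [hu]; group
    have hvb : b = y * v := by rw [hv]; group
    have cu := Subgroup.mem_center_iff.1 (hz hxa)
    have cv := Subgroup.mem_center_iff.1 (hz hyb)
    rw [← hu] at cu
    rw [← hv] at cv
    have : ⁅a, b⁆ = ⁅x, y⁆ := by
      rw [hua, hvb, commutatorElement_def, commutatorElement_def]
      rw [mul_inv_rev, mul_inv_rev]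
      calc x * u * (y * v) * (u⁻¹ * x⁻¹) * (v⁻¹ * y⁻¹)
          = x * (u * (y * v)) * (u⁻¹ * x⁻¹) * (v⁻¹ * y⁻¹) := by group
        _ = x * y * (v * x⁻¹) * (v⁻¹ * y⁻¹) := by rw [← cu (y * v)]; group
        _ = _ := by rw [← cv x⁻¹]; group
    rw [this]
    exact H.mul_mem (H.mul_mem (H.mul_mem hx hy) (H.inv_mem hx)) (H.inv_mem hy)
  rw [eq_top_iff]
  intro g _
  obtain ⟨x, hx, hxg⟩ := h g
  have := H.mul_mem hx (hc hxg)
  simpa using this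

open groupCohomology commutatorElement in
/-- Abstract counting lemma: a finite group of bimultiplicative maps without nonzero symmetric
members gives a lower bound for the Schur multiplier. -/
lemma sm_count {G : Type} [Group G] [Finite G] {P : Type} [AddCommGroup P] [Finite P]
    (Φ : P → G → G → Additive ℂˣ)
    (hadd : ∀ A B x y, Φ (A + B) x y = Φ A x y + Φ B x y)
    (hl : ∀ A x x' y, Φ A (x * x') y = Φ A x y + Φ A x' y)
    (hr : ∀ A x y y', Φ A x (y * y') = Φ A x y + Φ A x y')
    (hs : ∀ A, (∀ x y, Φ A x y = Φ A y x) → A = 0) :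
    Nat.card P ≤ Nat.card (commutator G) *
      Nat.card (groupCohomology (Rep.trivial ℤ G (Additive ℂˣ)) 2) := by
  have := sm_finite G
  have hcoc : ∀ A, (fun g : G × G => Φ A g.1 g.2) ∈
      cocycles₂ (Rep.trivial ℤ G (Additive ℂˣ)) := by
    intro A
    refine (sm_memZ _).2 fun g h j => ?_
    simp only [hl, hr]
    abel
  let Z : P →+ cocycles₂ (Rep.trivial ℤ G (Additive ℂˣ)) :=
    AddMonoidHom.mk' (fun A => ⟨fun g => Φ A g.1 g.2, hcoc A⟩) (by
      intro A B
      apply Subtype.ext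
      funext g
      exact hadd A B g.1 g.2)
  let ψ : P →+ groupCohomology (Rep.trivial ℤ G (Additive ℂˣ)) 2 :=
    ((H2π (Rep.trivial ℤ G (Additive ℂˣ))).hom.toAddMonoidHom).comp Z
  have hker : ∀ A : ψ.ker, ∃ c : G → Additive ℂˣ,
      ∀ g h : G, Φ A g h = c h - c (g * h) + c g := by
    intro A
    exact (sm_memB _).1 ((H2π_eq_zero_iff (A := Rep.trivial ℤ G (Additive ℂˣ)) (Z A.1)).1 A.2)
  choose c hc using hker
  have hkill : ∀ A x, ∀ z ∈ commutator G, Φ A x z = 0 := by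
    intro A x z hz
    let θ : G →* ℂˣ := MonoidHom.mk' (fun y => Additive.toMul (Φ A x y))
      (fun a b => congrArg Additive.toMul (hr A x a b))
    exact congrArg Additive.ofMul (Abelianization.commutator_subset_ker θ hz)
  have hmul : ∀ A x, ∀ z ∈ commutator G, c A (x * z) = c A x + c A z := by
    intro A x z hz
    have := hc A x z
    rw [hkill _ x z hz] at this
    have h2 : c A (x * z) = c A z - (c A z - c A (x * z) + c A x) + c A x := by abel
    rw [h2, ← this]
    abel
  let χ : ψ.ker → (commutator G →* ℂˣ) := fun A =>
    MonoidHom.mk' (fun z => Additive.toMul (c A z.1))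
      (fun a b => congrArg Additive.toMul (hmul A a.1 b.1 b.2))
  have hanti : ∀ (A : ψ.ker) x y, Φ A x y - Φ A y x = - c A ⁅x⁻¹, y⁻¹⁆ := by
    intro A x y
    have hz : ⁅x⁻¹, y⁻¹⁆ ∈ commutator G :=
      Subgroup.commutator_mem_commutator (Subgroup.mem_top _) (Subgroup.mem_top _)
    have h1 := hmul A (y * x) _ hz
    have h2 : y * x * ⁅x⁻¹, y⁻¹⁆ = x * y := by
      rw [commutatorElement_def]; group
    rw [h2] at h1
    rw [hc, hc, h1]
    abel
  have hχ : Function.Injective χ := by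
    intro A B h
    have h' : ∀ z ∈ commutator G, c A z = c B z := fun z hz =>
      congrArg Additive.ofMul (DFunLike.congr_fun h ⟨z, hz⟩)
    have hsub : ∀ x y, Φ (A - B : P) x y = Φ A x y - Φ B x y := by
      intro x y
      rw [eq_sub_iff_add_eq, ← hadd, sub_add_cancel]
    have h0 : (A - B : P) = 0 := by
      apply hs
      intro x y
      have hz : ⁅x⁻¹, y⁻¹⁆ ∈ commutator G :=
        Subgroup.commutator_mem_commutator (Subgroup.mem_top _) (Subgroup.mem_top _)
      have e : Φ A x y - Φ A y x = Φ B x y - Φ B y x := by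
        rw [hanti, hanti, h' _ hz]
      rw [hsub, hsub, sub_eq_sub_iff_sub_eq_sub]
      exact e
    exact Subtype.ext (sub_eq_zero.1 h0)
  obtain ⟨hf, hle⟩ := sm_card_hom (commutator G)
  have hk1 : Nat.card ψ.ker ≤ Nat.card (commutator G) :=
    (Nat.card_le_card_of_injective χ hχ).trans hle
  have hk2 : Nat.card (P ⧸ ψ.ker) ≤ Nat.card (groupCohomology (Rep.trivial ℤ G (Additive ℂˣ)) 2) :=
    Nat.card_le_card_of_injective _ (QuotientAddGroup.kerLift_injective ψ)
  rw [AddSubgroup.card_eq_card_quotient_mul_card_addSubgroup ψ.ker, mul_comm]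
  exact Nat.mul_le_mul hk1 hk2

/-- The coordinates on an elementary abelian quotient. -/
lemma sm_coords_aux {G : Type} [Group G] [Finite G] (p : ℕ) [Fact p.Prime]
    (hz : commutator G ≤ Subgroup.center G) {V : Type} [AddCommGroup V] [Module (ZMod p) V]
    (π : G →* Multiplicative V) (hπ : Function.Surjective π) (hker : π.ker ≤ commutator G) :
    ∃ n : ℕ, Group.rank G ≤ n ∧ ∃ (q : G → Fin n → ZMod p) (b : Fin n → G),
      (∀ x y, q (x * y) = q x + q y) ∧ ∀ i, q (b i) = Pi.single i 1 := by
  classical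
  have : Finite V := Finite.of_surjective (fun x => Multiplicative.toAdd (π x)) hπ
  have hfin : Module.Finite (ZMod p) V := Module.Finite.of_finite
  have hfree : Module.Free (ZMod p) V := Module.Free.of_divisionRing (ZMod p) V
  let B : Module.Basis (Fin (Module.finrank (ZMod p) V)) (ZMod p) V :=
    Module.finBasis (ZMod p) V
  choose b hb using fun i => hπ (Multiplicative.ofAdd (B i))
  refine ⟨_, ?_, fun x => B.equivFun (Multiplicative.toAdd (π x)), b, ?_, ?_⟩
  · let S : Finset G := Finset.univ.image b
    refine (Group.rank_le (S := S) ?_).trans (Finset.card_image_le.trans (by simp))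
    apply sm_gen hz
    intro g
    let W : AddSubgroup V := Subgroup.toAddSubgroup' ((Subgroup.closure (S : Set G)).map π)
    let W' : Submodule (ZMod p) V := AddSubgroup.toZModSubmodule p W
    have hW : W' = ⊤ := by
      rw [eq_top_iff, ← B.span_eq, Submodule.span_le]
      rintro _ ⟨i, rfl⟩
      exact ⟨b i, Subgroup.subset_closure (by simp [S]), hb i⟩
    have hg : Multiplicative.toAdd (π g) ∈ W' := by rw [hW]; trivial
    obtain ⟨x, hx, hxg⟩ := hg
    refine ⟨x, hx, hker ?_⟩
    have hxg' : π x = π g := hxg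
    rw [MonoidHom.mem_ker, map_mul, map_inv, hxg', inv_mul_cancel]
  · intro x y
    simp only [map_mul, toAdd_mul, map_add]
  · intro i
    simp only [hb, toAdd_ofAdd]
    ext j
    simp [Finsupp.single_apply, Pi.single_apply, eq_comm]

/-- The coordinates on the Frattini quotient. -/
lemma sm_coords {G : Type} [Group G] [Finite G] (p : ℕ) [Fact p.Prime]
    (hz : commutator G ≤ Subgroup.center G) (hp : ∀ x : G, x ^ p ∈ commutator G) :
    ∃ n : ℕ, Group.rank G ≤ n ∧ ∃ (q : G → Fin n → ZMod p) (b : Fin n → G),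
      (∀ x y, q (x * y) = q x + q y) ∧ ∀ i, q (b i) = Pi.single i 1 := by
  have hs : Function.Surjective (Abelianization.of : G →* Abelianization G) :=
    QuotientGroup.mk_surjective
  have hV : ∀ v : Additive (Abelianization G), p • v = 0 := by
    intro v
    obtain ⟨x, hx⟩ := hs (Additive.toMul v)
    have h1 : (Abelianization.of x) ^ p = 1 := by
      rw [← map_pow]
      exact (QuotientGroup.eq_one_iff _).2 (hp x)
    rw [hx] at h1
    exact congrArg Additive.ofMul h1
  let hM : Module (ZMod p) (Additive (Abelianization G)) := AddCommGroup.zmodModule hV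
  refine sm_coords_aux p hz (V := Additive (Abelianization G))
    ((MulEquiv.toMultiplicative_toAdditive (G := Abelianization G)).symm.toMonoidHom.comp
      Abelianization.of) ?_ ?_
  · exact (MulEquiv.toMultiplicative_toAdditive (G := Abelianization G)).symm.surjective.comp hs
  · intro x hx
    exact (QuotientGroup.eq_one_iff _).1 hx

lemma sm_lower {G : Type} [Group G] [Finite G] (p : ℕ) [Fact p.Prime]
    (hz : commutator G ≤ Subgroup.center G) (hp : ∀ x : G, x ^ p ∈ commutator G) :
    ∃ n : ℕ, Group.rank G ≤ n ∧ p ^ (n * (n - 1) / 2) ≤ Nat.card (commutator G) *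
      Nat.card (groupCohomology (Rep.trivial ℤ G (Additive ℂˣ)) 2) := by
  classical
  obtain ⟨n, hn, q, b, hq, hb⟩ := sm_coords p hz hp
  obtain ⟨e, he⟩ := sm_char p
  refine ⟨n, hn, ?_⟩
  have hcard : Nat.card ({s : Fin n × Fin n // s.1 < s.2} → ZMod p) = p ^ (n * (n - 1) / 2) := by
    rw [Nat.card_eq_fintype_card, Fintype.card_fun, ZMod.card, sm_pairs]
  rw [← hcard]
  refine sm_count (fun A x y => e (∑ s, A s * (q x s.1.1 * q y s.1.2))) ?_ ?_ ?_ ?_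
  · intro A B x y
    rw [← map_add, ← Finset.sum_add_distrib]
    simp only [Pi.add_apply, add_mul]
  · intro A x x' y
    rw [← map_add, ← Finset.sum_add_distrib]
    simp only [hq, Pi.add_apply, add_mul, mul_add]
  · intro A x x' y
    rw [← map_add, ← Finset.sum_add_distrib]
    simp only [hq, Pi.add_apply, mul_add]
  · intro A h
    funext s
    have h1 := he (h (b s.1.1) (b s.1.2))
    simp only [hb] at h1
    rw [Finset.sum_eq_single s, Finset.sum_eq_zero] at h1
    · simpa using h1
    · intro t _
      by_cases h1 : t.1.1 = s.1.2
      · have : t.1.2 ≠ s.1.1 := by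
          intro h2
          have := t.2
          have := s.2
          omega
        simp [Pi.single_apply, this]
      · simp [Pi.single_apply, h1]
    · intro t _ hts
      by_cases h1 : t.1.1 = s.1.1
      · have : t.1.2 ≠ s.1.2 := fun h2 => hts (Subtype.ext (Prod.ext h1 h2))
        simp [Pi.single_apply, this]
      · simp [Pi.single_apply, h1]
    · simp

lemma sm_central {G : Type} [Group G] [Group.IsNilpotent G]
    (hc : Group.nilpotencyClass G = 2) : commutator G ≤ Subgroup.center G := by
  have h : (⊤ : Subgroup G).lowerCentralSeries 2 = ⊥ :=
    Subgroup.lowerCentralSeries_eq_bot_iff_nilpotencyClass_le.2 hc.le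
  have h1 : ⁅commutator G, (⊤ : Subgroup G)⁆ = ⊥ := by
    rw [← h, Subgroup.lowerCentralSeries_succ, Subgroup.top_lowerCentralSeries_one]
  rw [Subgroup.commutator_eq_bot_iff_le_centralizer] at h1
  simpa [Subgroup.coe_top, Subgroup.centralizer_univ] using h1

theorem schur_multiplier_lower_bound_class_two (p k d : ℕ) (hp : p.Prime)
    (G : Type) [Group G] [Finite G] [Group.IsNilpotent G]
    (hpG : IsPGroup p G)
    (hc : Group.nilpotencyClass G = 2)
    (hGp : Subgroup.closure (Set.range fun x : G => x ^ p) ≤ commutator G)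
    (hk : Nat.card (commutator G) = p ^ k)
    (hd : Group.rank G = d) :
    (p : ℝ) ^ ((d : ℝ) * ((d : ℝ) - 1) / 2 - (k : ℝ)) ≤
      (Nat.card (schurMultiplier G) : ℝ) := by
  have : Fact p.Prime := ⟨hp⟩
  obtain ⟨n, hn, hle⟩ := sm_lower p (sm_central hc)
    (fun x => hGp (Subgroup.subset_closure ⟨x, rfl⟩))
  have hle1 : p ^ (d * (d - 1) / 2) ≤ p ^ k * Nat.card (schurMultiplier G) := by
    rw [← hk]
    refine le_trans (Nat.pow_le_pow_right hp.pos ?_) hle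
    rw [hd] at hn
    exact Nat.div_le_div_right (Nat.mul_le_mul hn (by omega))
  have hp0 : (0 : ℝ) < p := by exact_mod_cast hp.pos
  have hdd : ((d * (d - 1) / 2 : ℕ) : ℝ) = (d : ℝ) * ((d : ℝ) - 1) / 2 := by
    rw [← Nat.choose_two_right, Nat.cast_choose_two]
  rw [Real.rpow_sub hp0, ← hdd, Real.rpow_natCast, Real.rpow_natCast, div_le_iff₀ (by positivity)]
  rw [mul_comm (p ^ k)] at hle1
  exact_mod_cast hle1
end
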